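/- arXiv:2410.23899 — 2 statements merged into one kernel-verified Lean document; each statement's English description precedes it below -/
import Mathlib

section
/- (Lemma 3.3, modulus of continuity for a single bridge.) Fix p, M, ε, η ∈ (0,∞) and set σ = √(p(1+p)). There exist N3 ∈ ℕ and δ > 0, depending on p, M, ε, η, such that the following holds: for every integer n ≥ N3 and all x, y ∈ ℤ with x ≤ y, |x| ≤ M·n^{1/2} and |y − p·n| ≤ M·n^{1/2}, if Q has law P_Geom^{0,n,x,y} and 𝒬 ∈ C([0,1]) is defined by 𝒬(t) = σ^{-1}·n^{-1/2}·(Q(t·n) − p·t·n), then P( w(𝒬, δ) > ε ) < η. -/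
open MeasureTheory Filter Topology ProbabilityTheory
open scoped ENNReal NNReal

/-- An increasing (integer) path on the integer interval `⟦T0, T1⟧`,
extended constantly to the rest of `ℤ`. -/
def IncrPath (T0 T1 : ℤ) (L : ℤ → ℤ) : Prop :=
  (∀ j : ℤ, T0 ≤ j → j < T1 → L j ≤ L (j + 1)) ∧
  (∀ s : ℤ, s ≤ T0 → L s = L T0) ∧ (∀ s : ℤ, T1 ≤ s → L s = L T1)

/-- The set `Ω(T0,T1,x,y)` of increasing paths from `(T0,x)` to `(T1,y)`. -/
def OmegaPath (T0 T1 : ℤ) (x y : ℤ) : Set (ℤ → ℤ) :=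
  {L | IncrPath T0 T1 L ∧ L T0 = x ∧ L T1 = y}

/-- Linear interpolation of a real-valued function defined on `ℤ`. -/
noncomputable def interp (f : ℤ → ℝ) (t : ℝ) : ℝ :=
  f ⌊t⌋ + (t - ⌊t⌋) * (f (⌊t⌋ + 1) - f ⌊t⌋)

/-- Linear interpolation of an integer-valued function on `ℤ`. -/
noncomputable def interpZ (L : ℤ → ℤ) : ℝ → ℝ :=
  interp fun s => (L s : ℝ)

lemma interp_eq_on (f : ℤ → ℝ) (n : ℤ) :
    ∀ t ∈ Set.Icc (n : ℝ) ((n : ℝ) + 1),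
      interp f t = f n + (t - n) * (f (n + 1) - f n) := by
  intro t ht
  rcases lt_or_eq_of_le ht.2 with h | h
  · have hfl : ⌊t⌋ = n := by
      rw [Int.floor_eq_iff]
      · exact ⟨ht.1, by exact_mod_cast h⟩
    simp [interp, hfl]
  · have hfl : ⌊t⌋ = n + 1 := by
      rw [h, show ((n : ℝ) + 1) = ((n + 1 : ℤ) : ℝ) by push_cast; ring, Int.floor_intCast]
    rw [interp, hfl, h]
    push_cast
    ring

lemma continuous_interp (f : ℤ → ℝ) : Continuous (interp f) := by
  have hcov : (⋃ n : ℤ, Set.Icc (n : ℝ) ((n : ℝ) + 1)) = Set.univ := by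
    ext t
    simp only [Set.mem_iUnion, Set.mem_univ, iff_true, Set.mem_Icc]
    exact ⟨⌊t⌋, Int.floor_le t, (Int.lt_floor_add_one t).le⟩
  have hlf : LocallyFinite fun n : ℤ => Set.Icc (n : ℝ) ((n : ℝ) + 1) := by
    intro x
    refine ⟨Set.Ioo (x - 1) (x + 1), Ioo_mem_nhds (by linarith) (by linarith), ?_⟩
    apply Set.Finite.subset (Set.finite_Icc (⌊x⌋ - 2) (⌊x⌋ + 2))
    rintro n ⟨t, ht1, ht2⟩
    simp only [Set.mem_Icc] at ht1 ⊢
    simp only [Set.mem_Ioo] at ht2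
    constructor
    · have h1 : ((⌊x⌋ - 2 : ℤ) : ℝ) < n := by
        push_cast
        have := Int.floor_le x
        linarith [ht1.2, ht2.1]
      exact_mod_cast h1.le
    · have h2 : (n : ℝ) < ((⌊x⌋ + 2 : ℤ) : ℝ) := by
        push_cast
        have := Int.lt_floor_add_one x
        linarith [ht1.1, ht2.2]
      exact_mod_cast h2.le
  refine hlf.continuous hcov (fun n => isClosed_Icc) (fun n => ?_)
  have hc : ContinuousOn (fun t : ℝ => f n + (t - n) * (f (n + 1) - f n))
      (Set.Icc (n : ℝ) ((n : ℝ) + 1)) := (by continuity : Continuous _).continuousOn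
  exact hc.congr (interp_eq_on f n)

/-- The random variable `X` is uniformly distributed on the (finite) set `S` under `P`. -/
def UniformOn {Ω E : Type*} [MeasurableSpace Ω] (P : Measure Ω) (X : Ω → E)
    (S : Set E) : Prop :=
  (∀ ω, X ω ∈ S) ∧ ∀ Q ∈ S, P {ω | X ω = Q} = ((Nat.card S : ℝ≥0∞))⁻¹

/-- The modulus of continuity `w(h, δ)` of `h` on `[a,b]`. -/
noncomputable def modCont (h : ℝ → ℝ) (a b δ : ℝ) : ℝ :=
  sSup {v : ℝ | ∃ s ∈ Set.Icc a b, ∃ t ∈ Set.Icc a b, |s - t| ≤ δ ∧ v = |h s - h t|}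

/-!
A uniform bridge with `n` steps and total increment `k` is a uniform weak composition of `k` into
`n` parts, so the sum of any `j` parts follows the beta-binomial law, with factorial moments
`j (j + 1) ⋯ (j + r - 1) · k (k - 1) ⋯ (k - r + 1) / (n (n + 1) ⋯ (n + r - 1))`. If `k = O(n)`,
its fourth central moment is `O(j²)`; replacing the slope `k / n` by `p` shifts the increment by
`O(j / √n)`, which is `O(√j)` as `j ≤ n`. A process whose increments over `j` steps have fourth
moment `O(j²)` satisfies a maximal inequality: over a block of length `m` its maximal displacement
also has fourth moment `O(m²)`. About `n / m` blocks cover `[0, n]`, so some displacement over at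
most `m = δ n` steps exceeds `c √n` with probability `O(n / m · m² / n²) = O(δ)`.
-/

section BetaBinomial

open Finset

section PiAntidiag

variable {ι μ M : Type*} [AddCommMonoid μ] [AddCommMonoid M] {I J : Finset ι}

lemma eq_zero_of_mem_of_disjoint_support (hIJ : Disjoint I J) {h : ι → μ}
    (hh : ∀ i, h i ≠ 0 → i ∈ J) : ∀ i ∈ I, h i = 0 :=
  fun i hi ↦ by_contra fun hne ↦ disjoint_left.1 hIJ hi (hh i hne)

lemma sum_add_of_disjoint_support (hIJ : Disjoint I J) (g : ι → μ) {h : ι → μ}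
    (hh : ∀ i, h i ≠ 0 → i ∈ J) : ∑ i ∈ I, (g + h) i = ∑ i ∈ I, g i := by
  simp [sum_add_distrib, sum_eq_zero (eq_zero_of_mem_of_disjoint_support hIJ hh)]

lemma piecewise_add_of_disjoint_support [DecidableEq ι] (hIJ : Disjoint I J) {g h : ι → μ}
    (hg : ∀ i, g i ≠ 0 → i ∈ I) (hh : ∀ i, h i ≠ 0 → i ∈ J) : I.piecewise (g + h) 0 = g := by
  ext i
  by_cases hi : i ∈ I
  · simp [hi, eq_zero_of_mem_of_disjoint_support hIJ hh i hi]
  · simp [hi, not_imp_comm.1 (hg i) hi]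

lemma piecewise_add_piecewise_of_support_subset_union [DecidableEq ι] (hIJ : Disjoint I J)
    {f : ι → μ} (hf : ∀ i, f i ≠ 0 → i ∈ I ∪ J) : I.piecewise f 0 + J.piecewise f 0 = f := by
  ext i
  have hi := hf i
  have hd : i ∈ I → i ∉ J := fun h ↦ disjoint_left.1 hIJ h
  by_cases hI : i ∈ I <;> by_cases hJ : i ∈ J <;> simp_all

lemma sum_piAntidiag_union [DecidableEq ι] [HasAntidiagonal μ] [DecidableEq μ]
    (hIJ : Disjoint I J) (k : μ) (F : (ι → μ) → M) :
    ∑ f ∈ piAntidiag (I ∪ J) k, F f =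
      ∑ st ∈ antidiagonal k, ∑ g ∈ piAntidiag I st.1, ∑ h ∈ piAntidiag J st.2, F (g + h) := by
  simp_rw [← sum_product', sum_sigma']
  refine sum_bij' (fun f _ ↦ ⟨(∑ i ∈ I, f i, ∑ i ∈ J, f i), I.piecewise f 0, J.piecewise f 0⟩)
    (fun x _ ↦ x.2.1 + x.2.2) (fun f hf ↦ ?_) ?_ (fun f hf ↦ ?_) ?_ (fun f hf ↦ ?_)
  · simp only [mem_piAntidiag, sum_union hIJ] at hf
    simp +contextual [hf.1, sum_piecewise, piecewise]
  · rintro ⟨⟨s, t⟩, g, h⟩ hx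
    simp only [mem_sigma, HasAntidiagonal.mem_antidiagonal, mem_product, mem_piAntidiag] at hx ⊢
    obtain ⟨rfl, ⟨rfl, hg⟩, rfl, hh⟩ := hx
    refine ⟨?_, fun i hi ↦ ?_⟩
    · rw [sum_union hIJ, sum_add_of_disjoint_support hIJ g hh, add_comm g h,
        sum_add_of_disjoint_support hIJ.symm h hg]
    · by_contra hIJi
      rw [mem_union, not_or] at hIJi
      simp [not_imp_comm.1 (hg i) hIJi.1, not_imp_comm.1 (hh i) hIJi.2] at hi
  · exact piecewise_add_piecewise_of_support_subset_union hIJ (mem_piAntidiag.1 hf).2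
  · rintro ⟨⟨s, t⟩, g, h⟩ hx
    simp only [mem_sigma, mem_product, mem_piAntidiag] at hx
    obtain ⟨-, ⟨rfl, hg⟩, rfl, hh⟩ := hx
    have hJ := sum_add_of_disjoint_support hIJ.symm h hg
    have hJ' := piecewise_add_of_disjoint_support hIJ.symm hh hg
    rw [add_comm h g] at hJ hJ'
    simp only [sum_add_of_disjoint_support hIJ g hh, piecewise_add_of_disjoint_support hIJ hg hh,
      hJ, hJ']
  · rw [piecewise_add_piecewise_of_support_subset_union hIJ (mem_piAntidiag.1 hf).2]

end PiAntidiag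

lemma card_piAntidiag_eq_multichoose {ι : Type*} [DecidableEq ι] (s : Finset ι) (k : ℕ) :
    #(piAntidiag s k) = Nat.multichoose #s k := by
  simp [← card_finsuppAntidiag_nat_eq_multichoose, finsuppAntidiag]

/-- The sum of `φ s` over the ways of distributing `k` units over `j + l` cells, where `s` is the
number of units in the first `j` cells (see `sum_piAntidiag_eq_betaBinomialSum`). Divided by
`Nat.multichoose (j + l) k` it is the expectation of `φ` under the beta-binomial law with `k` trials
and shape parameters `j` and `l`. -/
def betaBinomialSum {R : Type*} [CommSemiring R] (j l k : ℕ) (φ : ℕ → R) : R :=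
  ∑ st ∈ antidiagonal k, (Nat.multichoose j st.1 : R) * Nat.multichoose l st.2 * φ st.1

section BetaBinomialSum

variable {R : Type*} [CommSemiring R]

lemma sum_piAntidiag_eq_betaBinomialSum {ι : Type*} [DecidableEq ι] {I S : Finset ι} (hI : I ⊆ S)
    (k : ℕ) (φ : ℕ → R) :
    ∑ f ∈ piAntidiag S k, φ (∑ i ∈ I, f i) = betaBinomialSum #I #(S \ I) k φ := by
  conv_lhs => rw [← union_sdiff_of_subset hI]
  rw [sum_piAntidiag_union disjoint_sdiff, betaBinomialSum]
  refine sum_congr rfl fun st _ ↦ ?_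
  have hφ : ∀ g ∈ piAntidiag I st.1, ∀ h ∈ piAntidiag (S \ I) st.2,
      φ (∑ i ∈ I, (g + h) i) = φ st.1 := by
    intro g hg h hh
    rw [mem_piAntidiag] at hg hh
    rw [sum_add_of_disjoint_support disjoint_sdiff g hh.2, hg.1]
  rw [sum_congr rfl fun g hg ↦ sum_congr rfl (hφ g hg)]
  simp [card_piAntidiag_eq_multichoose, mul_assoc]

lemma betaBinomialSum_one (j l k : ℕ) :
    betaBinomialSum j l k (fun _ ↦ (1 : R)) = Nat.multichoose (j + l) k := by
  have hsub : range j ⊆ range (j + l) := range_subset_range.2 (j.le_add_right l)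
  have h := sum_piAntidiag_eq_betaBinomialSum hsub k (fun _ ↦ (1 : R))
  simpa [card_piAntidiag_eq_multichoose, card_sdiff_of_subset hsub] using h.symm

lemma succ_mul_multichoose_succ (j s : ℕ) :
    (s + 1) * Nat.multichoose j (s + 1) = j * Nat.multichoose (j + 1) s := by
  rcases j with _ | j
  · simp
  · rw [Nat.multichoose_eq, Nat.multichoose_eq, show j + 1 + (s + 1) - 1 = j + 1 + s by lia,
      show j + 1 + 1 + s - 1 = j + 1 + s by lia, mul_comm, Nat.choose_succ_right_eq,
      Nat.add_sub_cancel, mul_comm]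

/-- Size biasing: a marked unit in the first `j` cells acts as an additional cell. -/
lemma betaBinomialSum_succ_mul_pred (j l k : ℕ) (φ : ℕ → R) :
    betaBinomialSum j l (k + 1) (fun s ↦ s * φ (s - 1)) = j * betaBinomialSum (j + 1) l k φ := by
  simp only [betaBinomialSum, Nat.antidiagonal_succ, sum_cons, sum_map, mul_sum, Nat.cast_zero,
    zero_mul, mul_zero, zero_add]
  refine sum_congr rfl fun st _ ↦ ?_
  have h : ((st.1 + 1 : ℕ) : R) * Nat.multichoose j (st.1 + 1) =
      j * Nat.multichoose (j + 1) st.1 := by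
    rw [← Nat.cast_mul, succ_mul_multichoose_succ, Nat.cast_mul]
  calc _ = (((st.1 + 1 : ℕ) : R) * Nat.multichoose j (st.1 + 1)) *
        Nat.multichoose l st.2 * φ st.1 := by simp; ring
    _ = _ := by rw [h]; ring

lemma betaBinomialSum_descFactorial (r j l k : ℕ) :
    betaBinomialSum j l k (fun s ↦ (s.descFactorial r : R)) * (j + l).ascFactorial r =
      j.ascFactorial r * k.descFactorial r * Nat.multichoose (j + l) k := by
  induction r generalizing j k with
  | zero => simpa using betaBinomialSum_one (R := R) j l k
  | succ r ih =>
    have desc_succ (s : ℕ) : s.descFactorial (r + 1) = s * (s - 1).descFactorial r := by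
      cases s with
      | zero => simp
      | succ s => rw [Nat.succ_descFactorial_succ, Nat.add_sub_cancel]
    have asc_succ (m : ℕ) : m.ascFactorial (r + 1) = m * (m + 1).ascFactorial r := by
      rw [Nat.ascFactorial_succ, Nat.succ_ascFactorial]
    simp only [desc_succ, asc_succ, Nat.cast_mul]
    rcases k with _ | k
    · simp [betaBinomialSum]
    · have hk : ((k + 1 : ℕ) : R) * Nat.multichoose (j + l) (k + 1) =
          (j + l : ℕ) * Nat.multichoose (j + l + 1) k := by
        rw [← Nat.cast_mul, succ_mul_multichoose_succ, Nat.cast_mul]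
      have hr := ih (j + 1) k
      rw [Nat.add_right_comm] at hr
      rw [betaBinomialSum_succ_mul_pred j l k fun s ↦ (s.descFactorial r : R)]
      calc _ = j * (j + l : ℕ) * (betaBinomialSum (j + 1) l k (fun s ↦ (s.descFactorial r : R)) *
            (j + l + 1).ascFactorial r) := by ring
        _ = j * (j + 1).ascFactorial r * k.descFactorial r *
            ((j + l : ℕ) * Nat.multichoose (j + l + 1) k) := by rw [hr]; ring
        _ = _ := by rw [← hk, Nat.add_sub_cancel]; ring

end BetaBinomialSum

/-- The fourth central moment of the beta-binomial law with `k` trials and shape parameters `j`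
and `l`, in the form given by the classical formula for the kurtosis. -/
noncomputable def betaBinomialFourthMoment (j l k : ℝ) : ℝ :=
  let n := j + l
  k * j * l * (n + k) / (n ^ 2 * (n + 1) * (n + 2) * (n + 3)) *
    (n * (n - 1 + 6 * k) + 3 * j * l * (k - 2) + 6 * k ^ 2 - 3 * j * l * k * (6 - k) / n
      - 18 * j * l * k ^ 2 / n ^ 2)

lemma sub_pow_four_eq_descFactorial (s : ℕ) (c : ℝ) :
    (s - c) ^ 4 = s.descFactorial 4 + (6 - 4 * c) * s.descFactorial 3 +
      (7 - 12 * c + 6 * c ^ 2) * s.descFactorial 2 +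
      (1 - 4 * c + 6 * c ^ 2 - 4 * c ^ 3) * s.descFactorial 1 + c ^ 4 * s.descFactorial 0 := by
  simp only [← descPochhammer_eval_eq_descFactorial, descPochhammer_succ_eval,
    descPochhammer_zero, Polynomial.eval_one]
  push_cast
  ring

lemma betaBinomialSum_sub_pow_four (j l k : ℕ) (h : 0 < j + l) :
    betaBinomialSum j l k (fun s ↦ (s - (j * k / (j + l) : ℝ)) ^ 4) =
      betaBinomialFourthMoment j l k * Nat.multichoose (j + l) k := by
  have hpos : (0 : ℝ) < j + l := mod_cast h
  have factorial_moment (r : ℕ) : betaBinomialSum j l k (fun s ↦ (s.descFactorial r : ℝ)) =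
      j.ascFactorial r * k.descFactorial r / (j + l).ascFactorial r *
        Nat.multichoose (j + l) k := by
    have hr : (0 : ℝ) < (j + l).ascFactorial r := by
      rw [← ascPochhammer_nat_eq_ascFactorial]
      exact_mod_cast ascPochhammer_pos r (j + l) h
    rw [div_mul_eq_mul_div, eq_div_iff hr.ne', betaBinomialSum_descFactorial]
  have expand (c : ℝ) : betaBinomialSum j l k (fun s ↦ (s - c) ^ 4) =
      betaBinomialSum j l k (fun s ↦ (s.descFactorial 4 : ℝ)) +
      (6 - 4 * c) * betaBinomialSum j l k (fun s ↦ (s.descFactorial 3 : ℝ)) +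
      (7 - 12 * c + 6 * c ^ 2) * betaBinomialSum j l k (fun s ↦ (s.descFactorial 2 : ℝ)) +
      (1 - 4 * c + 6 * c ^ 2 - 4 * c ^ 3) *
        betaBinomialSum j l k (fun s ↦ (s.descFactorial 1 : ℝ)) +
      c ^ 4 * betaBinomialSum j l k (fun s ↦ (s.descFactorial 0 : ℝ)) := by
    simp only [betaBinomialSum, mul_sum, ← sum_add_distrib, sub_pow_four_eq_descFactorial]
    exact sum_congr rfl fun st _ ↦ by ring
  simp only [expand, factorial_moment, betaBinomialFourthMoment]
  simp only [← descPochhammer_eval_eq_descFactorial, descPochhammer_succ_eval,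
    descPochhammer_zero, Polynomial.eval_one, Nat.ascFactorial]
  push_cast
  field_simp
  ring

lemma betaBinomialFourthMoment_le {j l k K : ℝ} (hj : 1 ≤ j) (hl : 0 ≤ l) (hk : 0 ≤ k)
    (hK : k ≤ K * (j + l)) :
    betaBinomialFourthMoment j l k ≤ K * (1 + K) * (1 + 9 * K + 9 * K ^ 2) * j ^ 2 := by
  simp only [betaBinomialFourthMoment]
  have hn0 : 0 < j + l := by linarith
  have hln : l ≤ j + l := by linarith
  set n := j + l
  have hK0 : 0 ≤ K := nonneg_of_mul_nonneg_left (hk.trans hK) hn0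
  have hprefactor : k * j * l * (n + k) / (n ^ 2 * (n + 1) * (n + 2) * (n + 3)) ≤
      K * (1 + K) * j / n ^ 2 := by
    rw [div_le_div_iff₀ (by positivity) (by positivity)]
    calc k * j * l * (n + k) * n ^ 2 ≤ K * n * j * n * (n + K * n) * n ^ 2 := by gcongr
      _ = K * (1 + K) * j * (n ^ 2 * n * n * n) := by ring
      _ ≤ K * (1 + K) * j * (n ^ 2 * (n + 1) * (n + 2) * (n + 3)) := by gcongr <;> linarith
  have hbracket : n * (n - 1 + 6 * k) + 3 * j * l * (k - 2) + 6 * k ^ 2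
      - 3 * j * l * k * (6 - k) / n - 18 * j * l * k ^ 2 / n ^ 2 ≤
      (1 + 9 * K + 9 * K ^ 2) * j * n ^ 2 := by
    have h₁ : n * (n - 1 + 6 * k) ≤ (1 + 6 * K) * j * n ^ 2 :=
      calc n * (n - 1 + 6 * k) ≤ n * (n + 6 * (K * n)) := by gcongr; linarith
        _ = (1 + 6 * K) * 1 * n ^ 2 := by ring
        _ ≤ (1 + 6 * K) * j * n ^ 2 := by gcongr
    have h₂ : 3 * j * l * (k - 2) ≤ 3 * K * j * n ^ 2 :=
      calc 3 * j * l * (k - 2) ≤ 3 * j * l * (K * n) := by gcongr; linarith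
        _ ≤ 3 * j * n * (K * n) := by gcongr
        _ = 3 * K * j * n ^ 2 := by ring
    have h₃ : 6 * k ^ 2 ≤ 6 * K ^ 2 * j * n ^ 2 :=
      calc 6 * k ^ 2 ≤ 6 * (K * n) ^ 2 := by gcongr
        _ = 6 * K ^ 2 * 1 * n ^ 2 := by ring
        _ ≤ 6 * K ^ 2 * j * n ^ 2 := by gcongr
    have h₄ : -(3 * j * l * k * (6 - k) / n) ≤ 3 * K ^ 2 * j * n ^ 2 := by
      rw [← neg_div, div_le_iff₀ hn0]
      calc -(3 * j * l * k * (6 - k)) = 3 * j * l * k * (k - 6) := by ring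
        _ ≤ 3 * j * l * k * (K * n) := by gcongr; linarith
        _ ≤ 3 * j * n * (K * n) * (K * n) := by gcongr
        _ = 3 * K ^ 2 * j * n ^ 2 * n := by ring
    have h₅ : 0 ≤ 18 * j * l * k ^ 2 / n ^ 2 := by positivity
    linarith
  calc _ ≤ k * j * l * (n + k) / (n ^ 2 * (n + 1) * (n + 2) * (n + 3)) *
        ((1 + 9 * K + 9 * K ^ 2) * j * n ^ 2) := by gcongr
    _ ≤ K * (1 + K) * j / n ^ 2 * ((1 + 9 * K + 9 * K ^ 2) * j * n ^ 2) := by gcongr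
    _ = K * (1 + K) * (1 + 9 * K + 9 * K ^ 2) * j ^ 2 := by field_simp

end BetaBinomial

section Chaining

open Finset

/-- Convexity of `x ↦ x ^ 4` at the weights `1 / 8` and `7 / 8`. What matters is that the
coefficient of `v ^ 4` stays below `2`, at any price for `u ^ 4`: see `sum_maxDist_pow_four_le`. -/
lemma add_pow_four_le (u v : ℝ) : (u + v) ^ 4 ≤ 512 * u ^ 4 + 3 / 2 * v ^ 4 := by
  have h := (even_two_mul 2).convexOn_pow (𝕜 := ℝ).2 (Set.mem_univ (8 * u))
    (Set.mem_univ (8 / 7 * v)) (by norm_num : (0 : ℝ) ≤ 1 / 8) (by norm_num : (0 : ℝ) ≤ 7 / 8)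
    (by norm_num)
  simp only [smul_eq_mul] at h
  calc (u + v) ^ 4 = (1 / 8 * (8 * u) + 7 / 8 * (8 / 7 * v)) ^ (2 * 2) := by ring
    _ ≤ 1 / 8 * (8 * u) ^ (2 * 2) + 7 / 8 * (8 / 7 * v) ^ (2 * 2) := h
    _ = 512 * u ^ 4 + 512 / 343 * v ^ 4 := by ring
    _ ≤ 512 * u ^ 4 + 3 / 2 * v ^ 4 := by linarith [show 0 ≤ v ^ 4 by positivity]

variable {α E : Type*} [PseudoMetricSpace E]

/-- The maximal distance of `X a` to the points `X a, …, X (a + m)`. -/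
noncomputable def maxDist (X : ℕ → E) (a m : ℕ) : ℝ :=
  (range (m + 1)).sup' nonempty_range_add_one fun i ↦ dist (X a) (X (a + i))

lemma dist_le_maxDist (X : ℕ → E) (a : ℕ) {i m : ℕ} (hi : i ≤ m) :
    dist (X a) (X (a + i)) ≤ maxDist X a m :=
  le_sup' (fun i ↦ dist (X a) (X (a + i))) (mem_range.2 (by lia))

lemma exists_maxDist_eq (X : ℕ → E) (a m : ℕ) :
    ∃ i ≤ m, maxDist X a m = dist (X a) (X (a + i)) := by
  obtain ⟨i, hi, h⟩ := exists_mem_eq_sup' (nonempty_range_add_one (n := m))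
    fun i ↦ dist (X a) (X (a + i))
  exact ⟨i, by simpa [Nat.lt_succ_iff] using hi, h⟩

lemma maxDist_nonneg (X : ℕ → E) (a m : ℕ) : 0 ≤ maxDist X a m :=
  dist_nonneg.trans (dist_le_maxDist X a m.zero_le)

lemma maxDist_one (X : ℕ → E) (a : ℕ) : maxDist X a 1 = dist (X a) (X (a + 1)) := by
  obtain ⟨i, hi, h⟩ := exists_maxDist_eq X a 1
  refine le_antisymm ?_ (dist_le_maxDist X a le_rfl)
  rw [h]
  interval_cases i <;> simp

lemma maxDist_add_pow_four_le (X : ℕ → E) (a m m' : ℕ) :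
    maxDist X a (m + m') ^ 4 ≤ 512 * dist (X a) (X (a + m)) ^ 4 +
      3 / 2 * (maxDist X a m ^ 4 + maxDist X (a + m) m' ^ 4) := by
  obtain ⟨i, hi, h⟩ := exists_maxDist_eq X a (m + m')
  have h0 := pow_nonneg (maxDist_nonneg X a m) 4
  have h0' := pow_nonneg (maxDist_nonneg X (a + m) m') 4
  rw [h]
  rcases le_total i m with him | him
  · have hd : dist (X a) (X (a + i)) ^ 4 ≤ maxDist X a m ^ 4 := by
      gcongr; exact dist_le_maxDist X a him
    have : 0 ≤ dist (X a) (X (a + m)) ^ 4 := by positivity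
    linarith
  · obtain ⟨i, rfl⟩ := Nat.exists_eq_add_of_le him
    calc dist (X a) (X (a + (m + i))) ^ 4
        ≤ (dist (X a) (X (a + m)) + maxDist X (a + m) m') ^ 4 := by
          gcongr
          refine (dist_triangle _ (X (a + m)) _).trans ?_
          rw [← add_assoc]
          gcongr
          exact dist_le_maxDist X (a + m) (by lia)
      _ ≤ _ := (add_pow_four_le _ _).trans (by linarith)

/-- The maximal inequality: doubling the length of the block multiplies the bound by `4`, of which
the two halves contribute `3 / 2 * 2` and the new midpoint the remaining `1`. -/
lemma sum_maxDist_pow_four_le {A : Finset α} {X : α → ℕ → E} {C : ℝ}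
    (h : ∀ a i, ∑ ω ∈ A, dist (X ω a) (X ω (a + i)) ^ 4 ≤ C * i ^ 2) (q a : ℕ) :
    ∑ ω ∈ A, maxDist (X ω) a (2 ^ q) ^ 4 ≤ 512 * C * 4 ^ q := by
  induction q generalizing a with
  | zero =>
    have h1 : ∑ ω ∈ A, dist (X ω a) (X ω (a + 1)) ^ 4 ≤ C := by simpa using h a 1
    have hC : 0 ≤ C := (sum_nonneg fun ω _ ↦ by positivity).trans h1
    simp only [pow_zero, maxDist_one]
    linarith
  | succ q ih =>
    have hmid : ∑ ω ∈ A, dist (X ω a) (X ω (a + 2 ^ q)) ^ 4 ≤ C * 4 ^ q := by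
      simpa [← pow_mul, mul_comm q 2, pow_mul (2 : ℝ) 2 q, show (2 : ℝ) ^ 2 = 4 by norm_num]
        using h a (2 ^ q)
    calc ∑ ω ∈ A, maxDist (X ω) a (2 ^ (q + 1)) ^ 4
        ≤ ∑ ω ∈ A, (512 * dist (X ω a) (X ω (a + 2 ^ q)) ^ 4 + 3 / 2 *
            (maxDist (X ω) a (2 ^ q) ^ 4 + maxDist (X ω) (a + 2 ^ q) (2 ^ q) ^ 4)) := by
          rw [pow_succ, mul_two]
          exact sum_le_sum fun ω _ ↦ maxDist_add_pow_four_le _ _ _ _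
      _ ≤ 512 * (C * 4 ^ q) + 3 / 2 * (512 * C * 4 ^ q + 512 * C * 4 ^ q) := by
          simp only [sum_add_distrib, ← mul_sum]
          gcongr
          exacts [ih a, ih (a + 2 ^ q)]
      _ = 512 * C * 4 ^ (q + 1) := by ring

/-- A pair at distance at most `m` lies in one block of length `m` or in two adjacent ones. -/
lemma dist_le_of_forall_maxDist_le {X : ℕ → E} {m N : ℕ} {Λ : ℝ}
    (h : ∀ c ≤ N / m, maxDist X (c * m) m ≤ Λ) {a b : ℕ} (hab : a ≤ b) (hbN : b ≤ N)
    (hbm : b ≤ a + m) : dist (X a) (X b) ≤ 3 * Λ := by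
  have hΛ : 0 ≤ Λ := (maxDist_nonneg X _ _).trans (h 0 (Nat.zero_le _))
  rcases m.eq_zero_or_pos with rfl | hm
  · obtain rfl : a = b := by lia
    simpa using hΛ
  have near {c e : ℕ} (hc : c ≤ N / m) (he : e ≤ c * m + m) (hce : c * m ≤ e) :
      dist (X (c * m)) (X e) ≤ Λ := by
    obtain ⟨i, rfl⟩ := Nat.exists_eq_add_of_le hce
    exact (dist_le_maxDist X _ (by lia)).trans (h c hc)
  have ha : a / m ≤ N / m := Nat.div_le_div_right (hab.trans hbN)
  have ham : a / m * m ≤ a := Nat.div_mul_le_self a m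
  have ham' : a < a / m * m + m := Nat.lt_div_mul_add hm
  have haX := near ha ham'.le ham
  rcases le_total b (a / m * m + m) with hb | hb
  · have hbX := near ha hb (by lia)
    linarith [dist_triangle_left (X a) (X b) (X (a / m * m))]
  · have := add_one_mul (a / m) m
    have hb' : a / m + 1 ≤ N / m := (Nat.le_div_iff_mul_le hm).2 (by lia)
    have hcX := near ha (e := (a / m + 1) * m) (by lia) (by lia)
    have hbX := near hb' (e := b) (by lia) (by lia)
    linarith [dist_triangle_left (X a) (X b) (X (a / m * m)),
      dist_triangle (X (a / m * m)) (X ((a / m + 1) * m)) (X b)]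

lemma card_mul_pow_four_le_of_lt_maxDist {A : Finset α} {X : α → ℕ → E} {C Λ : ℝ} (hΛ : 0 ≤ Λ)
    (h : ∀ a i, ∑ ω ∈ A, dist (X ω a) (X ω (a + i)) ^ 4 ≤ C * i ^ 2) {N q : ℕ}
    (hA : ∀ ω ∈ A, ∃ c ≤ N, Λ < maxDist (X ω) (c * 2 ^ q) (2 ^ q)) :
    #A * Λ ^ 4 ≤ (N + 1) * (512 * C * 4 ^ q) := by
  calc #A * Λ ^ 4 = ∑ ω ∈ A, Λ ^ 4 := by simp
    _ ≤ ∑ ω ∈ A, ∑ c ∈ range (N + 1), maxDist (X ω) (c * 2 ^ q) (2 ^ q) ^ 4 := by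
      gcongr with ω hω
      obtain ⟨c, hc, hlt⟩ := hA ω hω
      have hc' : c ∈ range (N + 1) := mem_range.2 (by lia)
      calc Λ ^ 4 ≤ maxDist (X ω) (c * 2 ^ q) (2 ^ q) ^ 4 := by gcongr
        _ ≤ _ := single_le_sum (f := fun c ↦ maxDist (X ω) (c * 2 ^ q) (2 ^ q) ^ 4)
          (fun c _ ↦ pow_nonneg (maxDist_nonneg _ _ _) 4) hc'
    _ = ∑ c ∈ range (N + 1), ∑ ω ∈ A, maxDist (X ω) (c * 2 ^ q) (2 ^ q) ^ 4 := sum_comm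
    _ ≤ ∑ c ∈ range (N + 1), 512 * C * 4 ^ q :=
      sum_le_sum fun c _ ↦ sum_maxDist_pow_four_le h q _
    _ = (N + 1) * (512 * C * 4 ^ q) := by simp

lemma card_mul_pow_four_le_of_lt_dist {A : Finset α} {X : α → ℕ → E} {C Λ : ℝ} (hΛ : 0 ≤ Λ)
    (h : ∀ a i, ∑ ω ∈ A, dist (X ω a) (X ω (a + i)) ^ 4 ≤ C * i ^ 2) {m n : ℕ} (hm : 0 < m)
    (hmn : m ≤ n)
    (hA : ∀ ω ∈ A, ∃ a b, a ≤ b ∧ b ≤ n ∧ b ≤ a + m ∧ 3 * Λ < dist (X ω a) (X ω b)) :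
    #A * Λ ^ 4 ≤ 3072 * C * m * n := by
  have hC : 0 ≤ C := by simpa using (sum_nonneg fun ω _ ↦ by positivity).trans (h 0 1)
  obtain ⟨q₀, hq₀, hq⟩ := exists_nat_pow_near (Nat.one_le_cast (α := ℝ).2 hm) one_lt_two
  set q := q₀ + 1 with hq_def
  have hmq : m ≤ 2 ^ q := by exact_mod_cast hq.le
  have hqm : (2 : ℝ) ^ q ≤ 2 * m := by rw [hq_def, pow_succ]; linarith
  have hblock : ∀ ω ∈ A, ∃ c ≤ n / 2 ^ q, Λ < maxDist (X ω) (c * 2 ^ q) (2 ^ q) := by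
    intro ω hω
    obtain ⟨a, b, hab, hbn, hbm, hlt⟩ := hA ω hω
    by_contra! hle
    exact hlt.not_ge (dist_le_of_forall_maxDist_le hle hab hbn (by lia))
  have hdiv : ((n / 2 ^ q : ℕ) : ℝ) * 2 ^ q ≤ n := mod_cast Nat.div_mul_le_self n (2 ^ q)
  calc #A * Λ ^ 4 ≤ ((n / 2 ^ q : ℕ) + 1) * (512 * C * 4 ^ q) :=
      card_mul_pow_four_le_of_lt_maxDist hΛ h hblock
    _ = 512 * C * (((n / 2 ^ q : ℕ) * 2 ^ q + 2 ^ q) * 2 ^ q) := by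
      rw [show (4 : ℝ) = 2 * 2 by norm_num, mul_pow]; ring
    _ ≤ 512 * C * ((n + 2 * n) * (2 * m)) := by
      gcongr
      exact hqm.trans (by gcongr)
    _ = 3072 * C * m * n := by ring

end Chaining

section Bridges

open Finset

/-- The path started at height `x` with step `f i` from time `i` to time `i + 1`, constant on
negative times. -/
def pathOfSteps (x : ℤ) (f : ℕ → ℕ) (j : ℤ) : ℤ :=
  x + ∑ i ∈ range j.toNat, (f i : ℤ)

lemma pathOfSteps_natCast (x : ℤ) (f : ℕ → ℕ) (i : ℕ) :
    pathOfSteps x f i = x + ∑ l ∈ range i, (f l : ℤ) := rfl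

lemma pathOfSteps_of_nonpos (x : ℤ) (f : ℕ → ℕ) {j : ℤ} (hj : j ≤ 0) : pathOfSteps x f j = x := by
  simp [pathOfSteps, Int.toNat_of_nonpos hj]

lemma pathOfSteps_sub_of_le (x : ℤ) (f : ℕ → ℕ) {a b : ℕ} (hab : a ≤ b) :
    pathOfSteps x f b - pathOfSteps x f a = ∑ i ∈ Ico a b, (f i : ℤ) := by
  rw [pathOfSteps_natCast, pathOfSteps_natCast, sum_Ico_eq_sub _ hab, add_sub_add_left_eq_sub]

lemma pathOfSteps_succ (x : ℤ) (f : ℕ → ℕ) (i : ℕ) :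
    pathOfSteps x f (i + 1 : ℕ) = pathOfSteps x f i + f i := by
  simp only [pathOfSteps_natCast, sum_range_succ, add_assoc]

lemma pathOfSteps_injective (x : ℤ) : Function.Injective (pathOfSteps x) := by
  intro f g h
  ext i
  have hi := congrFun h (i + 1 : ℕ)
  rw [pathOfSteps_succ, pathOfSteps_succ, h] at hi
  exact_mod_cast add_left_cancel hi

lemma incrPath_pathOfSteps (x : ℤ) {f : ℕ → ℕ} {n : ℕ} (hf : ∀ i, f i ≠ 0 → i < n) :
    IncrPath 0 n (pathOfSteps x f) := by
  refine ⟨fun j hj _ ↦ ?_, fun s hs ↦ ?_, fun s hs ↦ ?_⟩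
  · lift j to ℕ using hj
    have := pathOfSteps_succ x f j
    push_cast at this
    lia
  · rw [pathOfSteps_of_nonpos x f hs, pathOfSteps_of_nonpos x f le_rfl]
  · lift s to ℕ using n.cast_nonneg.trans hs
    rw [← sub_eq_zero, pathOfSteps_sub_of_le x f (Nat.cast_le.1 hs)]
    refine sum_eq_zero fun i hi ↦ Nat.cast_eq_zero.2 ?_
    exact by_contra fun hne ↦ (mem_Ico.1 hi).1.not_gt (hf i hne)

lemma IncrPath.exists_pathOfSteps_eq {L : ℤ → ℤ} {n : ℕ} (hL : IncrPath 0 n L) :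
    ∃ f : ℕ → ℕ, (∀ i, f i ≠ 0 → i < n) ∧ pathOfSteps (L 0) f = L := by
  obtain ⟨hmono, hleft, hright⟩ := hL
  have hconst (i : ℕ) (hi : n ≤ i) : L (i + 1) - L i = 0 := by
    rw [hright i (by lia), hright (i + 1) (by lia), sub_self]
  have hstep (i : ℕ) : ((L (i + 1) - L i).toNat : ℤ) = L (i + 1) - L i := by
    refine Int.toNat_of_nonneg ?_
    rcases lt_or_ge i n with hi | hi
    · exact sub_nonneg.2 (hmono i (by lia) (by lia))
    · exact (hconst i hi).ge
  refine ⟨fun i ↦ (L (i + 1) - L i).toNat, fun i hi ↦ ?_, funext fun j ↦ ?_⟩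
  · by_contra! hni
    simp [hconst i hni] at hi
  · rcases le_total 0 j with hj | hj
    · lift j to ℕ using hj
      rw [pathOfSteps_natCast, sum_congr rfl fun i _ ↦ hstep i]
      have htel := sum_range_sub (fun i : ℕ ↦ L i) j
      push_cast at htel
      rw [htel, add_sub_cancel]
    · rw [pathOfSteps_of_nonpos _ _ hj, hleft j hj]

/-- The paths from `(0, x)` to `(n, x + k)`, as a finite set: a path corresponds to its sequence of
steps, which is a weak composition of `k` into `n` parts. -/
def bridgePaths (n k : ℕ) (x : ℤ) : Finset (ℤ → ℤ) :=
  (piAntidiag (range n) k).map ⟨pathOfSteps x, pathOfSteps_injective x⟩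

lemma coe_bridgePaths (n k : ℕ) (x : ℤ) :
    (bridgePaths n k x : Set (ℤ → ℤ)) = OmegaPath 0 n x (x + k) := by
  have hend (z : ℤ) (f : ℕ → ℕ) : pathOfSteps z f n = z + k ↔ ∑ i ∈ range n, f i = k := by
    rw [pathOfSteps_natCast, add_right_inj]
    exact_mod_cast Iff.rfl
  ext L
  simp only [bridgePaths, coe_map, Function.Embedding.coeFn_mk, Set.mem_image, mem_coe,
    mem_piAntidiag, mem_range, OmegaPath, Set.mem_ofPred_eq]
  constructor
  · rintro ⟨f, ⟨hk, hf⟩, rfl⟩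
    exact ⟨incrPath_pathOfSteps x hf, pathOfSteps_of_nonpos x f le_rfl, (hend x f).2 hk⟩
  · rintro ⟨hL, rfl, hk⟩
    obtain ⟨f, hf, hfL⟩ := hL.exists_pathOfSteps_eq
    exact ⟨f, ⟨(hend (L 0) f).1 (by rw [hfL, hk]), hf⟩, hfL⟩

lemma card_bridgePaths (n k : ℕ) (x : ℤ) : #(bridgePaths n k x) = Nat.multichoose n k := by
  simp [bridgePaths, card_piAntidiag_eq_multichoose]

lemma sum_bridgePaths_sub_mean_pow_four_le {n k : ℕ} {K : ℝ} (hK : k ≤ K * n) (x : ℤ) {a b : ℕ}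
    (hab : a ≤ b) (hbn : b ≤ n) :
    ∑ L ∈ bridgePaths n k x, (L b - L a - (b - a) * k / n : ℝ) ^ 4 ≤
      K * (1 + K) * (1 + 9 * K + 9 * K ^ 2) * (b - a) ^ 2 * #(bridgePaths n k x) := by
  obtain rfl | hlt := hab.eq_or_lt
  · simp
  have hsub : Ico a b ⊆ range n := fun i hi ↦ mem_range.2 ((mem_Ico.1 hi).2.trans_le hbn)
  have hcompl : #(range n \ Ico a b) = n - (b - a) := by
    rw [card_sdiff_of_subset hsub, card_range, Nat.card_Ico]
  obtain ⟨l, hl⟩ : ∃ l, n = b - a + l := ⟨n - (b - a), by lia⟩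
  have hn : (n : ℝ) = (b - a : ℕ) + l := mod_cast hl
  have hsum : ∑ L ∈ bridgePaths n k x, (L b - L a - (b - a) * k / n : ℝ) ^ 4 =
      betaBinomialSum (b - a) l k
        (fun s ↦ (s - ((b - a : ℕ) * k / ((b - a : ℕ) + l) : ℝ)) ^ 4) := by
    have h := sum_piAntidiag_eq_betaBinomialSum hsub k
      fun s ↦ (s - ((b - a : ℕ) * k / n : ℝ)) ^ 4
    rw [Nat.card_Ico, hcompl, Nat.sub_eq_of_eq_add' hl, ← hn] at *
    rw [← h, bridgePaths, sum_map]
    refine sum_congr rfl fun f _ ↦ ?_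
    rw [Function.Embedding.coeFn_mk, ← Int.cast_sub, pathOfSteps_sub_of_le x f hab]
    push_cast [hab]
    rfl
  rw [hsum, betaBinomialSum_sub_pow_four _ _ _ (by lia), card_bridgePaths, hl, ← Nat.cast_sub hab]
  gcongr
  exact betaBinomialFourthMoment_le (by exact_mod_cast (by lia : 1 ≤ b - a)) l.cast_nonneg
    k.cast_nonneg (hn ▸ hK)

/-- The path `L` seen from the line of slope `p`. -/
def removeDrift (p : ℝ) (L : ℤ → ℤ) (j : ℤ) : ℝ :=
  L j - p * j

/-- The constant in the fourth moment bound `sum_bridgePaths_dist_pow_four_le` for bridges whose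
endpoint deviates from slope `p` by `M` in diffusive scale: `M ^ 4` accounts for this deviation and
the other summand for the fluctuations around the mean. -/
def bridgeConst (p M : ℝ) : ℝ :=
  8 * ((p + M) * (1 + (p + M)) * (1 + 9 * (p + M) + 9 * (p + M) ^ 2) + M ^ 4)

lemma le_add_mul_of_abs_sub_le {k n p M : ℝ} (hn : 1 ≤ n) (h : |k - p * n| ≤ M * √n) :
    k ≤ (p + M) * n := by
  have hM : 0 ≤ M :=
    nonneg_of_mul_nonneg_left ((abs_nonneg _).trans h) (Real.sqrt_pos.2 (by linarith))
  calc k ≤ p * n + M * √n := by linarith [le_abs_self (k - p * n)]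
    _ ≤ p * n + M * n := by gcongr; exact Real.sqrt_le_self_iff.2 (.inr hn)
    _ = (p + M) * n := by ring

lemma bridgeConst_nonneg {k n p M : ℝ} (hk : 0 ≤ k) (hn : 1 ≤ n) (h : |k - p * n| ≤ M * √n) :
    0 ≤ bridgeConst p M := by
  have hK : 0 ≤ p + M :=
    nonneg_of_mul_nonneg_left (hk.trans (le_add_mul_of_abs_sub_le hn h)) (by linarith)
  unfold bridgeConst
  positivity

lemma mul_div_pow_four_le {d j n M : ℝ} (hn : 0 < n) (hj : 0 ≤ j) (hjn : j ≤ n)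
    (hd : |d| ≤ M * √n) : (j * (d / n)) ^ 4 ≤ M ^ 4 * j ^ 2 := by
  have hd4 : d ^ 4 ≤ M ^ 4 * n ^ 2 :=
    calc d ^ 4 = |d| ^ 4 := (Even.pow_abs (by decide) d).symm
      _ ≤ (M * √n) ^ 4 := by gcongr
      _ = M ^ 4 * (√n ^ 2) ^ 2 := by ring
      _ = M ^ 4 * n ^ 2 := by rw [Real.sq_sqrt hn.le]
  calc (j * (d / n)) ^ 4 = j ^ 2 * j ^ 2 * d ^ 4 / n ^ 4 := by ring
    _ ≤ j ^ 2 * n ^ 2 * (M ^ 4 * n ^ 2) / n ^ 4 := by gcongr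
    _ = M ^ 4 * j ^ 2 := by field_simp

lemma sum_bridgePaths_dist_pow_four_le {n k : ℕ} {p M : ℝ} (h : |k - p * n| ≤ M * √n) (x : ℤ)
    {a b : ℕ} (hab : a ≤ b) (hbn : b ≤ n) :
    ∑ L ∈ bridgePaths n k x, dist (removeDrift p L a) (removeDrift p L b) ^ 4 ≤
      bridgeConst p M * (b - a) ^ 2 * #(bridgePaths n k x) := by
  obtain rfl | hlt := hab.eq_or_lt
  · simp
  have hn : (1 : ℝ) ≤ n := mod_cast (by lia : 1 ≤ n)
  have hn0 : (0 : ℝ) < n := by linarith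
  have hab' : (0 : ℝ) ≤ b - a := sub_nonneg.2 (mod_cast hab)
  have hban : (b - a : ℝ) ≤ n := by
    have : (b : ℝ) ≤ n := mod_cast hbn
    linarith [a.cast_nonneg (α := ℝ)]
  have hL (L : ℤ → ℤ) : dist (removeDrift p L a) (removeDrift p L b) ^ 4 ≤
      8 * ((L b - L a - (b - a) * k / n) ^ 4 + M ^ 4 * (b - a) ^ 2) := by
    have hsplit : removeDrift p L b - removeDrift p L a =
        (L b - L a - (b - a) * k / n) + (b - a) * ((k - p * n) / n) := by
      simp only [removeDrift, Int.cast_natCast]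
      field_simp
      ring
    rw [dist_comm, Real.dist_eq, Even.pow_abs (by decide), hsplit]
    refine (Even.add_pow_le (by decide)).trans ?_
    norm_num only
    gcongr
    exact mul_div_pow_four_le hn0 hab' hban h
  calc _ ≤ ∑ L ∈ bridgePaths n k x,
        8 * ((L b - L a - (b - a) * k / n : ℝ) ^ 4 + M ^ 4 * (b - a) ^ 2) :=
        sum_le_sum fun L _ ↦ hL L
    _ = 8 * (∑ L ∈ bridgePaths n k x, (L b - L a - (b - a) * k / n : ℝ) ^ 4 +
        M ^ 4 * (b - a) ^ 2 * #(bridgePaths n k x)) := by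
      rw [← mul_sum, sum_add_distrib, sum_const, nsmul_eq_mul, mul_comm (#_ : ℝ)]
    _ ≤ 8 * ((p + M) * (1 + (p + M)) * (1 + 9 * (p + M) + 9 * (p + M) ^ 2) * (b - a) ^ 2 *
        #(bridgePaths n k x) + M ^ 4 * (b - a) ^ 2 * #(bridgePaths n k x)) := by
      gcongr
      exact sum_bridgePaths_sub_mean_pow_four_le (le_add_mul_of_abs_sub_le hn h) x hab hbn
    _ = bridgeConst p M * (b - a) ^ 2 * #(bridgePaths n k x) := by rw [bridgeConst]; ring

lemma card_mul_pow_four_le_of_lt_dist_removeDrift {n k : ℕ} {p M : ℝ}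
    (h : |k - p * n| ≤ M * √n) {x : ℤ} {B : Finset (ℤ → ℤ)} (hB : B ⊆ bridgePaths n k x) {Λ : ℝ}
    (hΛ : 0 ≤ Λ) {m : ℕ} (hm : 0 < m) (hmn : m ≤ n)
    (hBΛ : ∀ L ∈ B, ∃ a b : ℕ, a ≤ b ∧ b ≤ n ∧ b ≤ a + m ∧
      3 * Λ < dist (removeDrift p L a) (removeDrift p L b)) :
    #B * Λ ^ 4 ≤ 3072 * bridgeConst p M * m * n * #(bridgePaths n k x) := by
  have hC : 0 ≤ bridgeConst p M :=
    bridgeConst_nonneg k.cast_nonneg (Nat.one_le_cast.2 (hm.trans_le hmn)) h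
  have hmoment (a i : ℕ) : ∑ L ∈ B, dist (removeDrift p L (min a n : ℕ))
      (removeDrift p L (min (a + i) n : ℕ)) ^ 4 ≤
      bridgeConst p M * #(bridgePaths n k x) * i ^ 2 := by
    have hai := Nat.le_add_right a i
    have hmin : ((min (a + i) n : ℕ) - (min a n : ℕ) : ℝ) ≤ i := by
      rw [sub_le_iff_le_add]
      exact_mod_cast (by lia : min (a + i) n ≤ i + min a n)
    have hmin' : (0 : ℝ) ≤ (min (a + i) n : ℕ) - (min a n : ℕ) :=
      sub_nonneg.2 (mod_cast min_le_min_right n hai)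
    calc _ ≤ ∑ L ∈ bridgePaths n k x, dist (removeDrift p L (min a n : ℕ))
          (removeDrift p L (min (a + i) n : ℕ)) ^ 4 :=
          sum_le_sum_of_subset_of_nonneg hB fun _ _ _ ↦ by positivity
      _ ≤ bridgeConst p M * ((min (a + i) n : ℕ) - (min a n : ℕ)) ^ 2 * #(bridgePaths n k x) :=
          sum_bridgePaths_dist_pow_four_le h x (min_le_min_right n hai) (min_le_right _ _)
      _ = bridgeConst p M * #(bridgePaths n k x) *
          ((min (a + i) n : ℕ) - (min a n : ℕ)) ^ 2 := mul_right_comm _ _ _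
      _ ≤ bridgeConst p M * #(bridgePaths n k x) * i ^ 2 := by gcongr
  calc #B * Λ ^ 4 ≤ 3072 * (bridgeConst p M * #(bridgePaths n k x)) * m * n := by
        refine card_mul_pow_four_le_of_lt_dist hΛ hmoment hm hmn fun L hL ↦ ?_
        obtain ⟨a, b, hab, hbn, hbm, hlt⟩ := hBΛ L hL
        refine ⟨a, b, hab, hbn, hbm, ?_⟩
        rwa [min_eq_left hbn, min_eq_left (hab.trans hbn)]
    _ = _ := by ring

end Bridges

section Interpolation

open Set

lemma interp_sub_mul (f : ℤ → ℝ) (p t : ℝ) :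
    interp (fun j ↦ f j - p * j) t = interp f t - p * t := by
  simp only [interp]
  push_cast
  ring

lemma dist_interp_interp_le {f : ℤ → ℝ} {lo hi m : ℤ} {Λ : ℝ} (hm : 0 < m)
    (h : ∀ a b, lo ≤ a → a ≤ b → b ≤ hi → b ≤ a + m → dist (f a) (f b) ≤ Λ) {u v : ℝ}
    (hu : lo ≤ u) (huv : u ≤ v) (hv : v ≤ hi) (hd : v - u ≤ m) :
    dist (interp f u) (interp f v) ≤ 3 * Λ := by
  have near_floor {w : ℝ} (hlo : lo ≤ w) (hhi : w ≤ hi) : dist (interp f w) (f ⌊w⌋) ≤ Λ := by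
    have hlo' : lo ≤ ⌊w⌋ := Int.le_floor.2 hlo
    have hfract : dist (interp f w) (f ⌊w⌋) = Int.fract w * dist (f ⌊w⌋) (f (⌊w⌋ + 1)) := by
      rw [interp, Int.self_sub_floor, dist_self_add_left, norm_mul,
        Real.norm_of_nonneg (Int.fract_nonneg w), dist_eq_norm']
    rcases (Int.floor_le w).eq_or_lt with hw | hw
    · rw [hfract, Int.fract, hw, sub_self, zero_mul]
      exact dist_nonneg.trans (h _ _ hlo' le_rfl (Int.cast_le.1 (hw.trans_le hhi)) (by lia))
    · have hhi' : ⌊w⌋ < hi := Int.cast_lt.1 (hw.trans_le hhi)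
      rw [hfract]
      exact (mul_le_of_le_one_left dist_nonneg (Int.fract_lt_one w).le).trans
        (h _ _ hlo' (by lia) hhi' (by lia))
  have hfloor : ⌊v⌋ ≤ ⌊u⌋ + m := by
    rw [← Int.floor_add_intCast]
    exact Int.floor_mono (by linarith)
  have hu' := near_floor hu (huv.trans hv)
  have hv' := near_floor (hu.trans huv) hv
  have huv' := h ⌊u⌋ ⌊v⌋ (Int.le_floor.2 hu) (Int.floor_mono huv)
    (Int.cast_le.1 ((Int.floor_le v).trans hv)) hfloor
  have h4 := dist_triangle4_right (interp f u) (interp f v) (f ⌊u⌋) (f ⌊v⌋)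
  linarith

lemma modCont_le {h : ℝ → ℝ} {a b δ C : ℝ} (hC : 0 ≤ C)
    (H : ∀ s t, a ≤ s → s ≤ t → t ≤ b → t - s ≤ δ → dist (h s) (h t) ≤ C) :
    modCont h a b δ ≤ C := by
  refine Real.sSup_le ?_ hC
  rintro _ ⟨s, hs, t, ht, hst, rfl⟩
  rw [abs_le] at hst
  rcases le_total s t with hle | hle
  · exact H s t hs.1 hle ht.2 (by linarith)
  · rw [abs_sub_comm]
    exact H t s ht.1 hle hs.2 (by linarith)

lemma modCont_mul_interp_le {f : ℤ → ℝ} {n m : ℕ} {r δ Λ : ℝ} (hr : 0 ≤ r) (hm : 0 < m)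
    (hδ : δ * n ≤ m)
    (h : ∀ a b : ℕ, a ≤ b → b ≤ n → b ≤ a + m → dist (f a) (f b) ≤ Λ) :
    modCont (fun t ↦ r * interp f (t * n)) 0 1 δ ≤ r * (3 * Λ) := by
  have hΛ : 0 ≤ Λ := by simpa using h 0 0 le_rfl n.zero_le (Nat.zero_le _)
  refine modCont_le (by positivity) fun s t hs hst ht hd ↦ ?_
  rw [Real.dist_eq, ← mul_sub, abs_mul, abs_of_nonneg hr, ← Real.dist_eq]
  gcongr
  refine dist_interp_interp_le (lo := 0) (hi := n) (m := m) (by lia) (fun a b ha hab hb hm ↦ ?_)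
    ?_ ?_ ?_ ?_
  · lift a to ℕ using ha
    lift b to ℕ using (Int.natCast_nonneg a).trans hab
    exact h a b (by lia) (by lia) (by lia)
  · rw [Int.cast_zero]; positivity
  · gcongr
  · exact mul_le_of_le_one_left n.cast_nonneg ht
  · calc t * n - s * n = (t - s) * n := by ring
      _ ≤ δ * n := by gcongr
      _ ≤ m := hδ

end Interpolation

lemma UniformOn.measure_setOf_le {Ω E : Type*} [MeasurableSpace Ω] {P : Measure Ω} {X : Ω → E}
    {S : Finset E} (hX : UniformOn P X S) (q : E → Prop) [DecidablePred q] :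
    P {ω | q (X ω)} ≤ (S.filter q).card / S.card := by
  calc P {ω | q (X ω)} ≤ P (⋃ x ∈ S.filter q, {ω | X ω = x}) := by
        refine measure_mono fun ω hω ↦ ?_
        simpa using ⟨hX.1 ω, hω⟩
    _ ≤ ∑ x ∈ S.filter q, P {ω | X ω = x} := measure_biUnion_finset_le _ _
    _ = ∑ _ ∈ S.filter q, (S.card : ℝ≥0∞)⁻¹ := by
        refine Finset.sum_congr rfl fun x hx ↦ ?_
        rw [hX.2 x (Finset.filter_subset _ _ hx)]
        simp
    _ = _ := by rw [Finset.sum_const, nsmul_eq_mul, div_eq_mul_inv]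

section ModulusOfContinuity

open Finset

/-- The diffusive rescaling `𝒬` of a path with drift `p` on `[0, n]`, with spatial scale `σ * √n`;
it is a function of the rescaled time `t ∈ [0, 1]`. -/
noncomputable def diffusiveRescaling (p σ : ℝ) (n : ℕ) (L : ℤ → ℤ) (t : ℝ) : ℝ :=
  σ⁻¹ * (√n)⁻¹ * (interpZ L (t * n) - p * t * n)

lemma diffusiveRescaling_eq_mul_interp (p σ : ℝ) (n : ℕ) (L : ℤ → ℤ) :
    diffusiveRescaling p σ n L = fun t ↦ σ⁻¹ * (√n)⁻¹ * interp (removeDrift p L) (t * n) := by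
  ext t
  rw [diffusiveRescaling, mul_assoc p, interpZ, ← interp_sub_mul]
  rfl

lemma exists_lt_dist_removeDrift_of_lt_modCont {p σ ε δ : ℝ} (hσ : 0 < σ) {n m : ℕ} (hn : 0 < n)
    (hm : 0 < m) (hδ : δ * n ≤ m) {L : ℤ → ℤ}
    (hL : ε < modCont (diffusiveRescaling p σ n L) 0 1 δ) :
    ∃ a b : ℕ, a ≤ b ∧ b ≤ n ∧ b ≤ a + m ∧
      3 * (ε * σ / 9 * √n) < dist (removeDrift p L a) (removeDrift p L b) := by
  by_contra! hle
  refine hL.not_ge ?_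
  calc modCont (diffusiveRescaling p σ n L) 0 1 δ
      ≤ σ⁻¹ * (√n)⁻¹ * (3 * (3 * (ε * σ / 9 * √n))) := by
        rw [diffusiveRescaling_eq_mul_interp]
        exact modCont_mul_interp_le (by positivity) hm hδ hle
    _ = ε := by field_simp; ring

lemma card_filter_lt_modCont_le {p M σ ε δ : ℝ} (hσ : 0 < σ) (hε : 0 < ε) (hδ : δ ≤ 1) {n k : ℕ}
    (hδn : 1 ≤ δ * n) (h : |k - p * n| ≤ M * √n) (x : ℤ)
    [DecidablePred fun L ↦ ε < modCont (diffusiveRescaling p σ n L) 0 1 δ] :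
    #{L ∈ bridgePaths n k x | ε < modCont (diffusiveRescaling p σ n L) 0 1 δ} ≤
      6144 * bridgeConst p M / (ε * σ / 9) ^ 4 * δ * #(bridgePaths n k x) := by
  have hn : 0 < n := by
    refine Nat.pos_of_ne_zero ?_
    rintro rfl
    norm_num at hδn
  have hC : 0 ≤ bridgeConst p M := bridgeConst_nonneg k.cast_nonneg (Nat.one_le_cast.2 hn) h
  have hm : 0 < ⌈δ * n⌉₊ := Nat.ceil_pos.2 (one_pos.trans_le hδn)
  have hmn : ⌈δ * n⌉₊ ≤ n := Nat.ceil_le.2 (mul_le_of_le_one_left n.cast_nonneg hδ)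
  have hmδ : (⌈δ * n⌉₊ : ℝ) ≤ 2 * (δ * n) := by
    linarith [Nat.ceil_lt_add_one (zero_le_one.trans hδn)]
  have hcard := card_mul_pow_four_le_of_lt_dist_removeDrift h
    (filter_subset (fun L ↦ ε < modCont (diffusiveRescaling p σ n L) 0 1 δ) (bridgePaths n k x))
    (by positivity) hm hmn fun L hL ↦ exists_lt_dist_removeDrift_of_lt_modCont hσ hn hm
      (Nat.le_ceil _) (mem_filter.1 hL).2
  have hsqrt : (ε * σ / 9 * √n) ^ 4 = (ε * σ / 9) ^ 4 * n ^ 2 := by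
    rw [mul_pow, pow_mul (√n) 2 2, Real.sq_sqrt n.cast_nonneg]
  rw [hsqrt, ← le_div_iff₀ (by positivity)] at hcard
  calc _ ≤ 3072 * bridgeConst p M * ⌈δ * n⌉₊ * n * #(bridgePaths n k x) /
        ((ε * σ / 9) ^ 4 * n ^ 2) := hcard
    _ ≤ 3072 * bridgeConst p M * (2 * (δ * n)) * n * #(bridgePaths n k x) /
        ((ε * σ / 9) ^ 4 * n ^ 2) := by gcongr
    _ = _ := by field_simp; ring

lemma measure_lt_modCont_le {p M σ ε δ : ℝ} (hσ : 0 < σ) (hε : 0 < ε) (hδ : δ ≤ 1) {n : ℕ}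
    (hδn : 1 ≤ δ * n) {x y : ℤ} (hxy : x ≤ y) (h : |(y : ℝ) - x - p * n| ≤ M * √n)
    {Ω : Type*} [MeasurableSpace Ω] {P : Measure Ω} {Q : Ω → ℤ → ℤ}
    (hQ : UniformOn P Q (OmegaPath 0 n x y)) :
    P {ω | ε < modCont (diffusiveRescaling p σ n (Q ω)) 0 1 δ} ≤
      ENNReal.ofReal (6144 * bridgeConst p M / (ε * σ / 9) ^ 4 * δ) := by
  classical
  obtain ⟨k, rfl⟩ := Int.le.dest hxy
  rw [← coe_bridgePaths] at hQ
  have hcard := card_filter_lt_modCont_le hσ hε hδ hδn (k := k) (by simpa using h) x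
  refine (hQ.measure_setOf_le fun L ↦ ε < modCont (diffusiveRescaling p σ n L) 0 1 δ).trans ?_
  refine ENNReal.div_le_of_le_mul ?_
  rw [← ENNReal.ofReal_natCast, ← ENNReal.ofReal_natCast, ← ENNReal.ofReal_mul' (by positivity)]
  exact ENNReal.ofReal_le_ofReal hcard

end ModulusOfContinuity

theorem modulus_single_bridge_general (p M : ℝ) {σ ε η : ℝ} (hσ : 0 < σ) (hε : 0 < ε)
    (hη : 0 < η) :
    ∃ (N : ℕ) (δ : ℝ), 0 < δ ∧ ∀ n : ℕ, N ≤ n → ∀ x y : ℤ, x ≤ y →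
      |(y : ℝ) - x - p * n| ≤ M * √n →
      ∀ (Ω : Type*) (_ : MeasurableSpace Ω) (P : Measure Ω) (Q : Ω → ℤ → ℤ),
        UniformOn P Q (OmegaPath 0 n x y) →
        P {ω | ε < modCont (diffusiveRescaling p σ n (Q ω)) 0 1 δ} < ENNReal.ofReal η := by
  set C := 6144 * bridgeConst p M / (ε * σ / 9) ^ 4
  have hlim : Tendsto (fun δ ↦ C * δ) (𝓝[>] 0) (𝓝 0) := by
    simpa using ((continuous_const_mul C).tendsto 0).mono_left nhdsWithin_le_nhds
  obtain ⟨δ, hδη, hδ0, hδ1⟩ := ((hlim.eventually_lt_const hη).and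
    (Ioo_mem_nhdsGT zero_lt_one)).exists
  refine ⟨⌈δ⁻¹⌉₊, δ, hδ0, fun n hn x y hxy h Ω _ P Q hQ ↦ ?_⟩
  have hδn : 1 ≤ δ * n := (inv_le_iff_one_le_mul₀' hδ0).1 (Nat.ceil_le.1 hn)
  exact (measure_lt_modCont_le hσ hε hδ1.le hδn hxy h hQ).trans_lt
    ((ENNReal.ofReal_lt_ofReal_iff hη).2 hδη)

/-- (Lemma 3.3, modulus of continuity for a single bridge.) A diffusively rescaled uniform
geometric random walk bridge has a well-behaved modulus of continuity. -/
theorem modulus_single_bridge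
    (p M ε η : ℝ) (hp : 0 < p) (hM : 0 < M) (hε : 0 < ε) (hη : 0 < η) :
    ∃ (N3 : ℕ) (δ : ℝ), 0 < δ ∧
      ∀ n : ℕ, N3 ≤ n → ∀ x y : ℤ, x ≤ y →
        |(x : ℝ)| ≤ M * Real.sqrt n → |(y : ℝ) - p * n| ≤ M * Real.sqrt n →
        ∀ (Ω : Type) (_ : MeasurableSpace Ω) (P : Measure Ω), IsProbabilityMeasure P →
        ∀ Q : Ω → ℤ → ℤ, UniformOn P Q (OmegaPath 0 n x y) →
          P {ω | ε < modCont (fun t => (Real.sqrt (p * (1 + p)))⁻¹ * (Real.sqrt n)⁻¹ *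
              (interpZ (Q ω) (t * n) - p * t * n)) 0 1 δ} < ENNReal.ofReal η := by
  obtain ⟨N, δ, hδ, H⟩ := modulus_single_bridge_general p (2 * M)
    (Real.sqrt_pos.2 (by positivity : 0 < p * (1 + p))) hε hη
  refine ⟨N, δ, hδ, fun n hn x y hxy hx hy Ω _ P _ Q hQ ↦ H n hn x y hxy ?_ Ω _ P Q hQ⟩
  rw [abs_le] at hx hy ⊢
  constructor <;> linarith
end

section
/- (Lemma 3.5, staying in the corridor.) Fix p, M1, M2, A ∈ (0,∞), δ1 ∈ (0,1/2), and σ = √(p(1+p)). There exist N4 ∈ ℕ and ε > 0, depending on p, M1, M2, A, δ1, such that the following holds for all integers n ≥ N4. Suppose x, y ∈ ℤ with x ≤ y, |x| ≤ M1·n^{1/2}, |y − n·p| ≤ M1·n^{1/2}, and B ∈ [−M2, M2]. Let f^t = f(·| A, B, σ^{-1}n^{-1/2}x, σ^{-1}n^{-1/2}(y−p·n), δ1) and f^b = f(·| −A, B, σ^{-1}n^{-1/2}x, σ^{-1}n^{-1/2}(y−p·n), δ1). If Q has law P_Geom^{0,n,x,y} and 𝒬 ∈ C([0,1]) is defined by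 𝒬(t) = σ^{-1}·n^{-1/2}·(Q(t·n) − p·t·n), then P( f^t(t) ≥ 𝒬(t) ≥ f^b(t) for all t ∈ [0,1] ) > ε. -/
open MeasureTheory Filter Topology ProbabilityTheory
open scoped ENNReal NNReal

/-- The piecewise linear function `f(·|A,B,x,y,δ)` on `[0,1]`: it takes value `x + A` at `0`,
`B + A` on `[δ, 1-δ]`, `y + A` at `1`, and is linear on `[0,δ]`, `[δ,1-δ]` and `[1-δ,1]`. -/
noncomputable def corridor (A B x y δ : ℝ) (t : ℝ) : ℝ :=
  if t ≤ δ then x + A + (t / δ) * (B - x)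
  else if t ≤ 1 - δ then B + A
  else B + A + ((t - (1 - δ)) / δ) * (y - B)

/-!
Under the uniform law, probabilities of bridges are ratios of path counts, so it suffices to show
that a positive proportion of all increasing paths stays in a tube of width of order `√n` around
the unscaled corridor.

The key device is a quadratic barrier `1 - ((e - c r)² + κ r) / λ²`. By the first two moments of
the number of paths, this barrier times the path count is a subsolution of the one-step recursion
for path counts, and it is nonpositive outside the strip of half-width `λ`. Comparison with it
gives both diffusive concentration of a bridge at intermediate times and a lower bound on the
number of paths confined to a tube during `τ n` steps, for small `τ`.

To restart from a prescribed window one uses that the numbers of paths through neighbouring points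
`z` and `z + 1` differ by a factor `1 + O(1/√n)`, so that the counts are comparable over distances
of order `√n` and a positive proportion of bridges hits each window of that size. Chaining boundedly
many blocks of length of order `τ n` then confines the bridge to the whole tube.
-/

section Multichoose

lemma sum_range_multichoose (r e : ℕ) :
    ∑ i ∈ Finset.range (e + 1), (r.multichoose i : ℝ) = (r + 1).multichoose e := by
  induction e with
  | zero => simp
  | succ e ih =>
    rw [Finset.sum_range_succ, ih, Nat.multichoose_succ_succ]
    push_cast
    ring

lemma succ_mul_multichoose_succ_s11 (r e : ℕ) :
    ((e : ℝ) + 1) * r.multichoose (e + 1) = (r + e) * r.multichoose e := by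
  rcases r with _ | r
  · cases e <;> simp [Nat.multichoose_zero_succ]
  · have h := Nat.add_one_mul_choose_eq (r + e) e
    rw [Nat.multichoose_eq, Nat.multichoose_eq, show r + 1 + (e + 1) - 1 = r + e + 1 by lia,
      show r + 1 + e - 1 = r + e by lia]
    push_cast
    have hcast : ((r : ℝ) + e + 1) * (r + e).choose e = (r + e + 1).choose (e + 1) * (e + 1) := by
      exact_mod_cast h
    linear_combination -hcast

lemma add_mul_multichoose (r e : ℕ) :
    ((r : ℝ) + e) * r.multichoose e = r * (r + 1).multichoose e := by
  cases e with
  | zero => simp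
  | succ e =>
    have hratio := succ_mul_multichoose_succ_s11 (r + 1) e
    rw [Nat.multichoose_succ_succ] at hratio ⊢
    push_cast at hratio ⊢
    linear_combination hratio

lemma sum_mul_multichoose (r e : ℕ) :
    ((r : ℝ) + 1) * ∑ i ∈ Finset.range (e + 1), (i : ℝ) * r.multichoose i
      = r * e * (r + 1).multichoose e := by
  induction e with
  | zero => simp
  | succ e ih =>
    have hadd := add_mul_multichoose r (e + 1)
    rw [Finset.sum_range_succ, mul_add, ih]
    rw [Nat.multichoose_succ_succ] at hadd ⊢
    push_cast at hadd ⊢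
    linear_combination hadd

lemma sum_mul_sub_one_mul_multichoose (r e : ℕ) :
    ((r : ℝ) + 2) * ∑ i ∈ Finset.range (e + 1), (i : ℝ) * (i - 1) * r.multichoose i
      = r * e * (e - 1) * (r + 1).multichoose e := by
  induction e with
  | zero => simp
  | succ e ih =>
    have hadd := add_mul_multichoose r (e + 1)
    rw [Finset.sum_range_succ, mul_add, ih]
    rw [Nat.multichoose_succ_succ] at hadd ⊢
    push_cast at hadd ⊢
    linear_combination 2 * (e : ℝ) * hadd

lemma sum_multichoose_mul_sub_sq (c : ℝ) (r e : ℕ) :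
    ∑ i ∈ Finset.range (e + 1), (r.multichoose i : ℝ) * ((i : ℝ) - c * r) ^ 2
      = (r + 1).multichoose e * (r ^ 2 * (e / (r + 1) - c) ^ 2
          + r * (e / (r + 1)) * (e / (r + 1) + 1) / (r + 2)) := by
  have hexpand : ∑ i ∈ Finset.range (e + 1), (r.multichoose i : ℝ) * ((i : ℝ) - c * r) ^ 2
      = (∑ i ∈ Finset.range (e + 1), (i : ℝ) * (i - 1) * r.multichoose i)
        + (1 - 2 * c * r) * (∑ i ∈ Finset.range (e + 1), (i : ℝ) * r.multichoose i)
        + c ^ 2 * r ^ 2 * ∑ i ∈ Finset.range (e + 1), (r.multichoose i : ℝ) := by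
    rw [Finset.mul_sum, Finset.mul_sum, ← Finset.sum_add_distrib, ← Finset.sum_add_distrib]
    exact Finset.sum_congr rfl fun i _ => by ring
  have hone := sum_mul_multichoose r e
  have htwo := sum_mul_sub_one_mul_multichoose r e
  rw [mul_comm, ← eq_div_iff (by positivity)] at hone htwo
  rw [hexpand, sum_range_multichoose, hone, htwo]
  field_simp
  ring

end Multichoose

/-- The growth rate, per step, of the second moment in `barrier`: it dominates the variance
produced by one step of a path of slope `c`. -/
def varianceRate (c : ℝ) : ℝ := c ^ 2 + (c + 1) ^ 2

lemma varianceRate_pos (c : ℝ) : 0 < varianceRate c := by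
  unfold varianceRate
  nlinarith [sq_nonneg (2 * c + 1)]

lemma sum_multichoose_mul_sq_add_le (c : ℝ) (r e : ℕ) :
    ∑ i ∈ Finset.range (e + 1), (r.multichoose i : ℝ) *
        (((i : ℝ) - c * r) ^ 2 + varianceRate c * r)
      ≤ (r + 1).multichoose e *
        (((e : ℝ) - c * (r + 1)) ^ 2 + varianceRate c * (r + 1)) := by
  set v : ℝ := e / (r + 1) with hv
  have he : (e : ℝ) = v * (r + 1) := by rw [hv]; field_simp
  have hvar : r * v * (v + 1) / (r + 2) ≤ (2 * r + 1) * (v - c) ^ 2 + varianceRate c := by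
    have hquad : v * (v + 1) ≤ 3 * (v - c) ^ 2 + varianceRate c := by
      unfold varianceRate
      nlinarith [sq_nonneg (4 * (v - c) - (2 * c + 1)), sq_nonneg (2 * c + 1)]
    rw [div_le_iff₀ (by positivity)]
    calc r * v * (v + 1) = r * (v * (v + 1)) := by ring
      _ ≤ r * (3 * (v - c) ^ 2 + varianceRate c) := by gcongr
      _ ≤ ((2 * r + 1) * (v - c) ^ 2 + varianceRate c) * (r + 2) := by
        have : 0 ≤ (2 * (r : ℝ) ^ 2 + 2 * r + 2) * (v - c) ^ 2 := by positivity
        linarith [varianceRate_pos c]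
  have hsum : ∑ i ∈ Finset.range (e + 1), (r.multichoose i : ℝ) *
        (((i : ℝ) - c * r) ^ 2 + varianceRate c * r)
      = (r + 1).multichoose e *
        (r ^ 2 * (v - c) ^ 2 + r * v * (v + 1) / (r + 2) + varianceRate c * r) := by
    simp_rw [mul_add _ (_ ^ 2), Finset.sum_add_distrib, ← Finset.sum_mul, sum_range_multichoose,
      sum_multichoose_mul_sub_sq, ← hv]
    ring
  rw [hsum, he]
  exact mul_le_mul_of_nonneg_left (by linarith) (Nat.cast_nonneg _)

/-- The number of increasing paths with `r` steps and total height `e`, as a real number. -/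
noncomputable def pathCount (r : ℕ) (e : ℤ) : ℝ :=
  if 0 ≤ e then (r.multichoose e.toNat : ℝ) else 0

lemma pathCount_nonneg (r : ℕ) (e : ℤ) : 0 ≤ pathCount r e := by
  unfold pathCount
  positivity

lemma pathCount_natCast (r e : ℕ) : pathCount r e = r.multichoose e := by
  simp [pathCount]

lemma pathCount_of_neg (r : ℕ) {e : ℤ} (he : e < 0) : pathCount r e = 0 :=
  if_neg he.not_ge

lemma pathCount_zero_left (e : ℤ) : pathCount 0 e = if e = 0 then 1 else 0 := by
  rcases lt_or_ge e 0 with he | he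
  · rw [pathCount_of_neg _ he, if_neg he.ne]
  · lift e to ℕ using he
    cases e with
    | zero => simp [pathCount]
    | succ e =>
      rw [pathCount_natCast, Nat.multichoose_zero_succ, Nat.cast_zero, if_neg (by lia)]

lemma succ_mul_pathCount_succ (r : ℕ) (e : ℤ) :
    ((e : ℝ) + 1) * pathCount r (e + 1) = (r + e) * pathCount r e := by
  rcases lt_or_ge e 0 with he | he
  · rw [pathCount_of_neg r he, mul_zero]
    rcases (Int.add_one_le_iff.2 he).lt_or_eq with he' | he'
    · rw [pathCount_of_neg r he', mul_zero]
    · rw [show (e : ℝ) + 1 = 0 by exact_mod_cast he', zero_mul]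
  · lift e to ℕ using he
    rw [← Nat.cast_add_one, pathCount_natCast, pathCount_natCast]
    exact succ_mul_multichoose_succ_s11 r e

lemma sum_Icc_sub_eq_sum_range {f : ℤ → ℝ} (hf : ∀ e < 0, f e = 0) {x z : ℤ} (hxz : x ≤ z)
    (w : ℤ) :
    ∑ u ∈ Finset.Icc x w, f (u - z) = ∑ i ∈ Finset.range (w - z + 1).toNat, f (i : ℤ) := by
  symm
  refine Finset.sum_of_injOn (fun i : ℕ => z + (i : ℤ)) (fun a _ b _ h => by simpa using h)
    (fun i hi => ?_) (fun u hu hnot => hf _ ?_) (fun i _ => by rw [add_sub_cancel_left])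
  · simp only [Finset.coe_range, Set.mem_Iio, Finset.coe_Icc, Set.mem_Icc] at *
    lia
  · by_contra! hcon
    rw [Finset.mem_Icc] at hu
    refine hnot ⟨(u - z).toNat, ?_, by simp only; lia⟩
    simp only [Finset.coe_range, Set.mem_Iio]
    lia

lemma sum_pathCount_sub {x z : ℤ} (hxz : x ≤ z) (r : ℕ) (w : ℤ) :
    ∑ u ∈ Finset.Icc x w, pathCount r (u - z) = pathCount (r + 1) (w - z) := by
  rw [sum_Icc_sub_eq_sum_range (fun e he => pathCount_of_neg r he) hxz]
  rcases lt_or_ge (w - z) 0 with h | h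
  · rw [pathCount_of_neg _ h, Int.toNat_of_nonpos h, Finset.sum_range_zero]
  · lift w - z to ℕ using h with e
    rw [← Nat.cast_add_one, Int.toNat_natCast]
    simp_rw [pathCount_natCast]
    exact sum_range_multichoose r e

/-- A quadratic barrier of width `lam` around the line of slope `c`: it is at most `1`, nonpositive
outside the strip of half-width `lam`, and multiplied by `pathCount` it is a subsolution of the
one-step recursion of `pathCount`. -/
noncomputable def barrier (c lam : ℝ) (r : ℕ) (e : ℤ) : ℝ :=
  1 - (((e : ℝ) - c * r) ^ 2 + varianceRate c * r) / lam ^ 2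

lemma barrier_le_one (c lam : ℝ) (r : ℕ) (e : ℤ) : barrier c lam r e ≤ 1 := by
  have := varianceRate_pos c
  exact sub_le_self 1 (by positivity)

lemma barrier_nonpos {c lam : ℝ} (hlam : 0 < lam) {r : ℕ} {e : ℤ} (h : lam ≤ |(e : ℝ) - c * r|) :
    barrier c lam r e ≤ 0 := by
  have hvar : 0 ≤ varianceRate c * r := mul_nonneg (varianceRate_pos c).le r.cast_nonneg
  have hsq : lam ^ 2 ≤ ((e : ℝ) - c * r) ^ 2 := by
    rw [← sq_abs ((e : ℝ) - c * r)]
    gcongr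
  rw [barrier, sub_nonpos, one_le_div (by positivity)]
  linarith

lemma one_sub_le_barrier {c lam θ d : ℝ} (hlam : 0 < lam) {r : ℕ} {e : ℤ}
    (he : |(e : ℝ) - c * r| ≤ d) (hd : d ^ 2 + varianceRate c * r ≤ θ * lam ^ 2) :
    1 - θ ≤ barrier c lam r e := by
  have hsq : ((e : ℝ) - c * r) ^ 2 ≤ d ^ 2 := sq_le_sq' (abs_le.1 he).1 (abs_le.1 he).2
  rw [barrier, sub_le_sub_iff_left, div_le_iff₀ (by positivity)]
  linarith

lemma pathCount_mul_barrier_le_sum (c lam : ℝ) {x z : ℤ} (hxz : x ≤ z) (r : ℕ) (w : ℤ) :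
    pathCount (r + 1) (w - z) * barrier c lam (r + 1) (w - z) ≤
      ∑ u ∈ Finset.Icc x w, pathCount r (u - z) * barrier c lam r (u - z) := by
  rw [sum_Icc_sub_eq_sum_range (f := fun e => pathCount r e * barrier c lam r e)
    (fun e he => by rw [pathCount_of_neg r he, zero_mul]) hxz]
  rcases lt_or_ge (w - z) 0 with h | h
  · rw [pathCount_of_neg _ h, Int.toNat_of_nonpos h, Finset.sum_range_zero, zero_mul]
  · lift w - z to ℕ using h with e
    have hmoment := div_le_div_of_nonneg_right (sum_multichoose_mul_sq_add_le c r e)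
      (sq_nonneg lam)
    rw [← Nat.cast_add_one, Int.toNat_natCast]
    simp only [barrier, pathCount_natCast, mul_sub, mul_one, Finset.sum_sub_distrib,
      sum_range_multichoose, ← mul_div_assoc, ← Finset.sum_div]
    push_cast
    linarith

/-- The number of increasing paths from `(0, x)` to `(t + m, w)` that pass through `(t, z)`. -/
noncomputable def throughCount (x : ℤ) (t m : ℕ) (w z : ℤ) : ℝ :=
  pathCount t (z - x) * pathCount m (w - z)

lemma throughCount_nonneg (x : ℤ) (t m : ℕ) (w z : ℤ) : 0 ≤ throughCount x t m w z :=
  mul_nonneg (pathCount_nonneg _ _) (pathCount_nonneg _ _)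

lemma throughCount_of_lt {x z : ℤ} (hzx : z < x) (t m : ℕ) (w : ℤ) :
    throughCount x t m w z = 0 := by
  rw [throughCount, pathCount_of_neg t (by lia), zero_mul]

lemma throughCount_zero (x : ℤ) (t : ℕ) (w z : ℤ) :
    throughCount x t 0 w z = if z = w then pathCount t (w - x) else 0 := by
  rw [throughCount, pathCount_zero_left]
  split_ifs <;> lia

lemma sum_throughCount (x : ℤ) (t m : ℕ) (w z : ℤ) :
    ∑ u ∈ Finset.Icc x w, throughCount x t m u z = throughCount x t (m + 1) w z := by
  rcases lt_or_ge z x with hzx | hxz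
  · simp_rw [throughCount_of_lt hzx, Finset.sum_const_zero]
  · simp_rw [throughCount, ← Finset.mul_sum, sum_pathCount_sub hxz]

lemma throughCount_mul_barrier_le_sum (c lam : ℝ) (x : ℤ) (t m : ℕ) (w z : ℤ) :
    throughCount x t (m + 1) w z * barrier c lam (m + 1) (w - z) ≤
      ∑ u ∈ Finset.Icc x w, throughCount x t m u z * barrier c lam m (u - z) := by
  rcases lt_or_ge z x with hzx | hxz
  · simp_rw [throughCount_of_lt hzx, zero_mul, Finset.sum_const_zero, le_refl]
  · simp_rw [throughCount, mul_assoc, ← Finset.mul_sum]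
    exact mul_le_mul_of_nonneg_left (pathCount_mul_barrier_le_sum c lam hxz m w)
      (pathCount_nonneg _ _)

section Concentration

variable {c lam : ℝ} {x : ℤ} {t : ℕ}

lemma pathCount_mul_barrier_le_sum_throughCount {Z : Finset ℤ} (m : ℕ) {w : ℤ}
    (hZ : Finset.Icc x w ⊆ Z) :
    pathCount (t + m) (w - x) * barrier c lam (t + m) (w - x) ≤
      ∑ z ∈ Z, throughCount x t m w z * barrier c lam t (z - x) := by
  induction m generalizing w with
  | zero =>
    simp_rw [throughCount_zero, ite_mul, zero_mul, Finset.sum_ite_eq']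
    split_ifs with hw
    · rfl
    · have hwx : w < x := by
        by_contra! hxw
        exact hw (hZ (Finset.mem_Icc.2 ⟨hxw, le_rfl⟩))
      rw [pathCount_of_neg _ (by lia), zero_mul]
  | succ m ih =>
    calc pathCount (t + m + 1) (w - x) * barrier c lam (t + m + 1) (w - x)
        ≤ ∑ u ∈ Finset.Icc x w, pathCount (t + m) (u - x) * barrier c lam (t + m) (u - x) :=
          pathCount_mul_barrier_le_sum c lam le_rfl _ w
      _ ≤ ∑ u ∈ Finset.Icc x w, ∑ z ∈ Z, throughCount x t m u z * barrier c lam t (z - x) := by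
          refine Finset.sum_le_sum fun u hu => ih (subset_trans ?_ hZ)
          exact Finset.Icc_subset_Icc_right (Finset.mem_Icc.1 hu).2
      _ = ∑ z ∈ Z, throughCount x t (m + 1) w z * barrier c lam t (z - x) := by
          rw [Finset.sum_comm]
          simp_rw [← Finset.sum_mul, sum_throughCount]

/-- The integers at distance at most `h` from the real number `a`. -/
noncomputable def window (a h : ℝ) : Finset ℤ := Finset.Icc ⌈a - h⌉ ⌊a + h⌋

lemma mem_window {a h : ℝ} {z : ℤ} : z ∈ window a h ↔ |(z : ℝ) - a| ≤ h := by
  rw [window, Finset.mem_Icc, Int.ceil_le, Int.le_floor, abs_le]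
  constructor <;> rintro ⟨h₁, h₂⟩ <;> constructor <;> linarith

lemma pathCount_mul_barrier_le_sum_window (hlam : 0 < lam) (m : ℕ) (w : ℤ) :
    pathCount (t + m) (w - x) * barrier c lam (t + m) (w - x) ≤
      ∑ z ∈ window (x + c * t) lam, throughCount x t m w z := by
  calc pathCount (t + m) (w - x) * barrier c lam (t + m) (w - x)
      ≤ ∑ z ∈ Finset.Icc x w ∪ window (x + c * t) lam,
          throughCount x t m w z * barrier c lam t (z - x) :=
        pathCount_mul_barrier_le_sum_throughCount m Finset.subset_union_left
    _ ≤ ∑ z ∈ Finset.Icc x w ∪ window (x + c * t) lam,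
          if z ∈ window (x + c * t) lam then throughCount x t m w z else 0 := by
        refine Finset.sum_le_sum fun z _ => ?_
        split_ifs with hz
        · exact mul_le_of_le_one_right (throughCount_nonneg _ _ _ _ _) (barrier_le_one _ _ _ _)
        · rw [mem_window, not_le, ← sub_sub, ← Int.cast_sub] at hz
          exact mul_nonpos_of_nonneg_of_nonpos (throughCount_nonneg _ _ _ _ _)
            (barrier_nonpos hlam hz.le)
    _ = ∑ z ∈ window (x + c * t) lam, throughCount x t m w z := by
        rw [Finset.sum_ite_mem, Finset.union_inter_cancel_right]

end Concentration

section TubePaths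

lemma IncrPath.monotone {T0 T1 : ℤ} {L : ℤ → ℤ} (hL : IncrPath T0 T1 L) : Monotone L := by
  refine monotone_int_of_le_succ fun j => ?_
  rcases lt_or_ge j T0 with hj | hj
  · rw [hL.2.1 j hj.le, hL.2.1 (j + 1) hj]
  rcases lt_or_ge j T1 with hj' | hj'
  · exact hL.1 j hj hj'
  · rw [hL.2.2 j hj', hL.2.2 (j + 1) (by lia)]

/-- The increasing paths from `(0, x)` to `(n, w)` whose value at each time `j ≤ n` lies
in `T j`. -/
def tubePaths (T : ℕ → Set ℤ) (x : ℤ) (n : ℕ) (w : ℤ) : Set (ℤ → ℤ) :=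
  {L ∈ OmegaPath 0 n x w | ∀ j : ℕ, j ≤ n → L j ∈ T j}

/-- The path that follows `L` up to time `n` and takes the value `w` afterwards. -/
def extendPath (n : ℕ) (w : ℤ) (L : ℤ → ℤ) (s : ℤ) : ℤ := if s ≤ n then L s else w

lemma extendPath_of_le {n : ℕ} {s : ℤ} (hs : s ≤ n) (w : ℤ) (L : ℤ → ℤ) :
    extendPath n w L s = L s :=
  if_pos hs

lemma extendPath_of_lt {n : ℕ} {s : ℤ} (hs : n < s) (w : ℤ) (L : ℤ → ℤ) :
    extendPath n w L s = w :=
  if_neg hs.not_ge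

variable {T : ℕ → Set ℤ} {x : ℤ}

lemma tubePaths_univ (x : ℤ) (n : ℕ) (w : ℤ) :
    tubePaths (fun _ => Set.univ) x n w = OmegaPath 0 n x w := by
  simp [tubePaths]

lemma tubePaths_eq_empty {n : ℕ} {w : ℤ} (hw : w ∉ T n) : tubePaths T x n w = ∅ :=
  Set.eq_empty_of_forall_notMem fun _ hL => hw (hL.1.2.2 ▸ hL.2 n le_rfl)

lemma tubePaths_zero_subset (w : ℤ) : tubePaths T x 0 w ⊆ {fun _ => x} := by
  rintro L ⟨⟨hL, hx, -⟩, -⟩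
  ext s
  rcases le_total s 0 with hs | hs
  · rw [hL.2.1 s hs, hx]
  · rw [hL.2.2 s (by simpa using hs), Nat.cast_zero, hx]

lemma const_mem_tubePaths_zero (hx : x ∈ T 0) : (fun _ => x) ∈ tubePaths T x 0 x :=
  ⟨⟨⟨fun _ _ _ => le_rfl, fun _ _ => rfl, fun _ _ => rfl⟩, rfl, rfl⟩, fun j hj => by
    rwa [Nat.le_zero.1 hj]⟩

lemma extendPath_mem_tubePaths {n : ℕ} {z w : ℤ} (hw : w ∈ T (n + 1)) (hzw : z ≤ w) {L : ℤ → ℤ}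
    (hL : L ∈ tubePaths T x n z) : extendPath n w L ∈ tubePaths T x (n + 1) w := by
  obtain ⟨⟨⟨hmono, hleft, -⟩, hx, hz⟩, hT⟩ := hL
  refine ⟨⟨⟨fun j hj hjn => ?_, fun s hs => ?_, fun s hs => ?_⟩, ?_, ?_⟩, fun j hj => ?_⟩
  · push_cast at hjn
    rcases (Int.lt_add_one_iff.1 hjn).lt_or_eq with hlt | rfl
    · rw [extendPath_of_le hlt.le, extendPath_of_le (by lia)]
      exact hmono j hj hlt
    · rw [extendPath_of_le le_rfl, extendPath_of_lt (by lia), hz]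
      exact hzw
  · rw [extendPath_of_le (by lia), extendPath_of_le (by lia), hleft s hs]
  · rw [extendPath_of_lt (by lia), extendPath_of_lt (by lia)]
  · rw [extendPath_of_le (by lia), hx]
  · rw [extendPath_of_lt (by lia)]
  · rcases hj.lt_or_eq with hlt | rfl
    · rw [extendPath_of_le (by lia)]
      exact hT j (by lia)
    · rwa [extendPath_of_lt (by lia)]

lemma exists_extendPath_eq {n : ℕ} {w : ℤ} {L : ℤ → ℤ} (hL : L ∈ tubePaths T x (n + 1) w) :
    ∃ z ∈ Finset.Icc x w, ∃ L' ∈ tubePaths T x n z, extendPath n w L' = L := by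
  obtain ⟨⟨hincr, hx, hw⟩, hT⟩ := hL
  have hmono := hincr.monotone
  have hxn : x ≤ L n := hx ▸ hmono n.cast_nonneg
  have hnw : L n ≤ w := hw ▸ hmono (by lia)
  refine ⟨L n, Finset.mem_Icc.2 ⟨hxn, hnw⟩, extendPath n (L n) L,
    ⟨⟨⟨fun j _ hjn => ?_, fun s hs => ?_, fun s hs => ?_⟩, ?_, ?_⟩, fun j hj => ?_⟩, ?_⟩
  · rw [extendPath_of_le (by lia), extendPath_of_le (by lia)]
    exact hmono (by lia)
  · rw [extendPath_of_le (by lia), extendPath_of_le (by lia), hincr.2.1 s hs]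
  · rw [extendPath, extendPath, if_pos le_rfl]
    split_ifs with hs'
    · rw [le_antisymm hs' hs]
    · rfl
  · rw [extendPath_of_le (by lia), hx]
  · rw [extendPath_of_le le_rfl]
  · rw [extendPath_of_le (by lia)]
    exact hT j (by lia)
  · ext s
    simp only [extendPath]
    split_ifs with hs
    · rfl
    · rw [hincr.2.2 s (by lia), hw]

lemma tubePaths_succ {n : ℕ} {w : ℤ} (hw : w ∈ T (n + 1)) :
    tubePaths T x (n + 1) w =
      ⋃ z ∈ (Finset.Icc x w : Set ℤ), extendPath n w '' tubePaths T x n z := by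
  ext L
  simp only [Set.mem_iUnion, Set.mem_image, Finset.mem_coe, exists_prop]
  refine ⟨exists_extendPath_eq, ?_⟩
  rintro ⟨z, hz, L', hL', rfl⟩
  exact extendPath_mem_tubePaths hw (Finset.mem_Icc.1 hz).2 hL'

lemma injOn_extendPath (n : ℕ) (z w : ℤ) :
    Set.InjOn (extendPath n w) (tubePaths T x n z) := by
  intro L hL L' hL' h
  ext s
  rcases le_or_gt s n with hs | hs
  · simpa only [extendPath_of_le hs] using congrFun h s
  · rw [hL.1.1.2.2 s hs.le, hL'.1.1.2.2 s hs.le, hL.1.2.2, hL'.1.2.2]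

lemma finite_tubePaths (n : ℕ) (w : ℤ) : (tubePaths T x n w).Finite := by
  induction n generalizing w with
  | zero => exact (Set.finite_singleton _).subset (tubePaths_zero_subset w)
  | succ n ih =>
    by_cases hw : w ∈ T (n + 1)
    · rw [tubePaths_succ hw]
      exact (Finset.finite_toSet _).biUnion fun z _ => (ih z).image _
    · rw [tubePaths_eq_empty hw]
      exact Set.finite_empty

lemma ncard_tubePaths_zero (hx : x ∈ T 0) (w : ℤ) :
    (tubePaths T x 0 w).ncard = if w = x then 1 else 0 := by
  split_ifs with hw
  · rw [hw, Set.Subset.antisymm (tubePaths_zero_subset x)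
      (Set.singleton_subset_iff.2 (const_mem_tubePaths_zero hx)), Set.ncard_singleton]
  · refine (Set.ncard_eq_zero (finite_tubePaths 0 w)).2 ?_
    exact Set.eq_empty_of_forall_notMem fun L hL => hw (hL.1.2.2.symm.trans hL.1.2.1)

lemma ncard_tubePaths_succ {n : ℕ} {w : ℤ} (hw : w ∈ T (n + 1)) :
    (tubePaths T x (n + 1) w).ncard = ∑ z ∈ Finset.Icc x w, (tubePaths T x n z).ncard := by
  rw [tubePaths_succ hw, Set.Finite.ncard_biUnion (Finset.finite_toSet _)
    (fun z _ => (finite_tubePaths n z).image _), finsum_mem_coe_finset]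
  · exact Finset.sum_congr rfl fun z _ => (injOn_extendPath n z w).ncard_image
  · rintro z - z' - hne
    refine Set.disjoint_left.2 ?_
    rintro _ ⟨L, hL, rfl⟩ ⟨L', hL', h⟩
    have hn := congrFun h n
    rw [extendPath_of_le le_rfl, extendPath_of_le le_rfl, hL.1.2.2, hL'.1.2.2] at hn
    exact hne hn.symm

lemma ncard_omegaPath (x : ℤ) (n : ℕ) (w : ℤ) :
    ((OmegaPath 0 n x w).ncard : ℝ) = pathCount n (w - x) := by
  rw [← tubePaths_univ]
  induction n generalizing w with
  | zero =>
    rw [ncard_tubePaths_zero (Set.mem_univ x), pathCount_zero_left]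
    simp [sub_eq_zero]
  | succ n ih =>
    rw [ncard_tubePaths_succ (Set.mem_univ w), Nat.cast_sum]
    simp_rw [ih]
    exact sum_pathCount_sub le_rfl n w

lemma mul_sum_throughCount_mul_barrier_le_ncard {c lam ε : ℝ} (hlam : 0 < lam) (hε : 0 ≤ ε)
    {t m : ℕ} {W : Finset ℤ}
    (hstart : ∀ z ∈ W, ε * pathCount t (z - x) ≤ (tubePaths T x t z).ncard)
    (htube : ∀ r ≤ m, ∀ z ∈ W, ∀ u : ℤ, |((u - z : ℤ) : ℝ) - c * r| < lam → u ∈ T (t + r))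
    (w : ℤ) :
    ε * ∑ z ∈ W, throughCount x t m w z * barrier c lam m (w - z)
      ≤ (tubePaths T x (t + m) w).ncard := by
  induction m generalizing w with
  | zero =>
    have hbarrier := barrier_le_one c lam 0 (w - w)
    simp_rw [throughCount_zero, ite_mul, zero_mul, Finset.sum_ite_eq']
    split_ifs with hw
    · refine le_trans ?_ (hstart w hw)
      exact mul_le_mul_of_nonneg_left
        (mul_le_of_le_one_right (pathCount_nonneg _ _) hbarrier) hε
    · simp
  | succ m ih =>
    have ih := ih fun r hr => htube r (hr.trans m.le_succ)
    by_cases hw : w ∈ T (t + m + 1)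
    · rw [← add_assoc, ncard_tubePaths_succ hw, Nat.cast_sum]
      calc ε * ∑ z ∈ W, throughCount x t (m + 1) w z * barrier c lam (m + 1) (w - z)
          ≤ ε * ∑ z ∈ W, ∑ u ∈ Finset.Icc x w,
              throughCount x t m u z * barrier c lam m (u - z) := by
            gcongr
            exact throughCount_mul_barrier_le_sum c lam x t m w _
        _ = ∑ u ∈ Finset.Icc x w, ε * ∑ z ∈ W,
              throughCount x t m u z * barrier c lam m (u - z) := by
            rw [Finset.sum_comm, Finset.mul_sum]
        _ ≤ ∑ u ∈ Finset.Icc x w, ((tubePaths T x (t + m) u).ncard : ℝ) :=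
            Finset.sum_le_sum fun u _ => ih u
    · refine le_trans (mul_nonpos_of_nonneg_of_nonpos hε (Finset.sum_nonpos fun z hz => ?_))
        (Nat.cast_nonneg _)
      refine mul_nonpos_of_nonneg_of_nonpos (throughCount_nonneg _ _ _ _ _)
        (barrier_nonpos hlam ?_)
      by_contra! hlt
      exact hw (htube (m + 1) le_rfl z hz w hlt)

end TubePaths

section Harnack

lemma throughCount_succ_mul (x : ℤ) (t m : ℕ) (w z : ℤ) :
    throughCount x t m w (z + 1) * (((z - x : ℤ) + 1) * (m + (w - z : ℤ) - 1) : ℝ)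
      = throughCount x t m w z * ((t + (z - x : ℤ)) * (w - z : ℤ)) := by
  have hleft := succ_mul_pathCount_succ t (z - x)
  have hright := succ_mul_pathCount_succ m (w - z - 1)
  rw [sub_add_cancel] at hright
  rw [throughCount, throughCount, show z + 1 - x = z - x + 1 by ring,
    show w - (z + 1) = w - z - 1 by ring]
  push_cast at hleft hright ⊢
  linear_combination (pathCount m (w - z - 1) * (m + (w - z) - 1)) * hleft
    - (pathCount t (z - x) * (t + (z - x))) * hright

lemma le_one_add_div_mul {a b X Y L d : ℝ} (ha : 0 ≤ a) (hL : 0 < L) (hLX : L ≤ X) (hd : 0 ≤ d)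
    (hYX : Y ≤ X + d) (h : b * X = a * Y) : b ≤ (1 + d / L) * a := by
  have hX : 0 < X := hL.trans_le hLX
  refine le_of_mul_le_mul_right ?_ hX
  calc b * X = a * Y := h
    _ ≤ a * (X + d) := by gcongr
    _ ≤ a * (X + d / L * X) := by
        gcongr
        rw [div_mul_eq_mul_div, le_div_iff₀ hL]
        gcongr
    _ = (1 + d / L) * a * X := by ring

lemma abs_transition_sub_le {C p s t m u v : ℝ} (hp : 0 ≤ p) (hs : 1 ≤ s) (ht : 0 ≤ t)
    (hm : 0 ≤ m) (htm : t + m ≤ s ^ 2) (hu : |u - p * t| ≤ C * s) (hv : |v - p * m| ≤ C * s) :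
    |(u + 1) * (m + v - 1) - (t + u) * v| ≤ (3 * C + p + 2) * s ^ 3 := by
  have hs0 : 0 ≤ s := by linarith
  have hCs : 0 ≤ C * s := (abs_nonneg _).trans hu
  have hs2 : 1 ≤ s ^ 2 := one_le_pow₀ hs
  have hs23 : s ^ 2 ≤ s ^ 3 := pow_le_pow_right₀ hs (by norm_num)
  have hCs3 : C * s ≤ C * s ^ 3 := by nlinarith
  have hdrift : |m * (u - p * t) - t * (v - p * m)| ≤ C * s ^ 3 := by
    calc |m * (u - p * t) - t * (v - p * m)| ≤ |m * (u - p * t)| + |t * (v - p * m)| := abs_sub _ _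
      _ = m * |u - p * t| + t * |v - p * m| := by
          rw [abs_mul, abs_mul, abs_of_nonneg hm, abs_of_nonneg ht]
      _ ≤ m * (C * s) + t * (C * s) := by gcongr
      _ = (t + m) * (C * s) := by ring
      _ ≤ s ^ 2 * (C * s) := by gcongr
      _ = C * s ^ 3 := by ring
  have hmt : |p * (m - t)| ≤ p * s ^ 2 := by
    rw [abs_mul, abs_of_nonneg hp]
    exact mul_le_mul_of_nonneg_left (abs_le.2 ⟨by linarith, by linarith⟩) hp
  have hps : p * s ^ 2 ≤ p * s ^ 3 := by gcongr
  rw [abs_le] at *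
  constructor <;> linarith

lemma exists_throughCount_succ_le {p τ : ℝ} (hp : 0 < p) (hτ : 0 < τ) {C : ℝ} (hC : 0 ≤ C) :
    ∃ K > 0, ∀ᶠ s : ℝ in atTop, ∀ t m : ℕ, τ * s ^ 2 ≤ t → τ * s ^ 2 ≤ m → (t : ℝ) + m ≤ s ^ 2 →
      ∀ x w z : ℤ, |((z - x : ℤ) : ℝ) - p * t| ≤ C * s → |((w - z : ℤ) : ℝ) - p * m| ≤ C * s →
        throughCount x t m w (z + 1) ≤ (1 + K / s) * throughCount x t m w z ∧
        throughCount x t m w z ≤ (1 + K / s) * throughCount x t m w (z + 1) := by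
  set q := p * τ / 2 with hq
  have hq0 : 0 < q := by positivity
  refine ⟨(3 * C + p + 2) / q ^ 2, by positivity, ?_⟩
  filter_upwards [eventually_ge_atTop 1, eventually_ge_atTop (C / q)] with s hs hsC
  intro t m ht hm htm x w z hz hw
  have hs0 : 0 < s := by linarith
  have hheight : ∀ {r : ℕ} {e : ℝ}, τ * s ^ 2 ≤ r → |e - p * r| ≤ C * s → q * s ^ 2 ≤ e := by
    intro r e hr he
    have hCq : C * s ≤ q * s * s := mul_le_mul_of_nonneg_right ((div_le_iff₀' hq0).1 hsC) hs0.le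
    have hpr : p * (τ * s ^ 2) ≤ p * r := by gcongr
    rw [hq] at hCq ⊢
    linarith [(abs_le.1 he).1]
  have hu := hheight ht hz
  have hv := hheight hm hw
  have hqs : 0 ≤ q * s ^ 2 := by positivity
  have hm1 : (1 : ℝ) ≤ m := by
    have : (0 : ℝ) < m := lt_of_lt_of_le (by positivity) hm
    exact_mod_cast this
  have hdiff := abs_le.1 (abs_transition_sub_le hp.le hs t.cast_nonneg m.cast_nonneg htm hz hw)
  have hX : q * s ^ 2 * (q * s ^ 2) ≤ (((z - x : ℤ) + 1) * (m + (w - z : ℤ) - 1) : ℝ) := by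
    apply mul_le_mul <;> first | positivity | linarith
  have hY : q * s ^ 2 * (q * s ^ 2) ≤ ((t + (z - x : ℤ)) * (w - z : ℤ) : ℝ) := by
    refine mul_le_mul ?_ hv (by positivity) ?_ <;> linarith [t.cast_nonneg (α := ℝ)]
  have hrate : (3 * C + p + 2) / q ^ 2 / s
      = (3 * C + p + 2) * s ^ 3 / (q * s ^ 2 * (q * s ^ 2)) := by
    field_simp
  rw [hrate]
  exact ⟨le_one_add_div_mul (throughCount_nonneg _ _ _ _ _) (by positivity) hX (by positivity)
      (by linarith) (throughCount_succ_mul x t m w z),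
    le_one_add_div_mul (throughCount_nonneg _ _ _ _ _) (by positivity) hY (by positivity)
      (by linarith) (throughCount_succ_mul x t m w z).symm⟩

lemma le_exp_mul_of_neighbour_le {f : ℤ → ℝ} (hf : ∀ z, 0 ≤ f z) {S : Set ℤ} (hS : S.OrdConnected)
    {κ N : ℝ} (hκ : 0 ≤ κ)
    (hstep : ∀ z ∈ S, f (z + 1) ≤ (1 + κ) * f z ∧ f z ≤ (1 + κ) * f (z + 1)) {z z' : ℤ}
    (hz : z ∈ S) (hz' : z' ∈ S) (hN : |(z' : ℝ) - z| ≤ N) :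
    f z' ≤ Real.exp (N * κ) * f z := by
  have hpow : ∀ k : ℕ, (k : ℝ) ≤ N → (1 + κ) ^ k * f z ≤ Real.exp (N * κ) * f z := by
    intro k hk
    refine mul_le_mul_of_nonneg_right ?_ (hf z)
    calc (1 + κ) ^ k ≤ Real.exp κ ^ k := by
          gcongr
          linarith [Real.add_one_le_exp κ]
      _ = Real.exp (k * κ) := (Real.exp_nat_mul κ k).symm
      _ ≤ Real.exp (N * κ) := by gcongr
  rcases le_total z z' with hle | hle
  · obtain ⟨k, rfl⟩ := Int.le.dest hle
    have hgeom := le_geom (u := fun i : ℕ => f (z + i)) (by linarith : 0 ≤ 1 + κ) k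
      fun i hi => by
        rw [Nat.cast_add_one, ← add_assoc]
        exact (hstep _ (hS.out hz hz' ⟨by lia, by lia⟩)).1
    rw [Nat.cast_zero, add_zero] at hgeom
    refine hgeom.trans (hpow k ?_)
    simpa using hN
  · obtain ⟨k, rfl⟩ := Int.le.dest hle
    have hgeom := le_geom (u := fun i : ℕ => f (z' + k - i)) (by linarith : 0 ≤ 1 + κ) k
      fun i hi => by
        have hmem : z' + k - (i + 1) ∈ S := hS.out hz' hz ⟨by lia, by lia⟩
        simpa [sub_add_eq_sub_sub] using (hstep _ hmem).2
    rw [Nat.cast_zero, sub_zero, add_sub_cancel_right] at hgeom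
    refine hgeom.trans (hpow k ?_)
    simpa using hN

lemma exists_throughCount_le_mul {p τ : ℝ} (hp : 0 < p) (hτ : 0 < τ) {C₀ C : ℝ} (hC₀ : 0 ≤ C₀)
    (hC : 0 ≤ C) :
    ∃ H > 0, ∀ᶠ s : ℝ in atTop, ∀ t m : ℕ, τ * s ^ 2 ≤ t → τ * s ^ 2 ≤ m → (t : ℝ) + m ≤ s ^ 2 →
      ∀ x w : ℤ, |(w : ℝ) - x - p * (t + m)| ≤ C₀ * s →
      ∀ z ∈ window (x + p * t) (C * s), ∀ z' ∈ window (x + p * t) (C * s),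
        throughCount x t m w z' ≤ H * throughCount x t m w z := by
  obtain ⟨K, hK, hstep⟩ := exists_throughCount_succ_le hp hτ (add_nonneg hC₀ hC)
  refine ⟨Real.exp (2 * C * K), Real.exp_pos _, ?_⟩
  filter_upwards [hstep, eventually_gt_atTop 0] with s hstep hs t m ht hm htm x w hw z hz z' hz'
  have hexp : 2 * C * K = 2 * C * s * (K / s) := by field_simp
  rw [hexp]
  refine le_exp_mul_of_neighbour_le (throughCount_nonneg x t m w)
    (S := window (x + p * t) (C * s)) ?_ (by positivity) (fun y hy => ?_) hz hz' ?_
  · rw [window, Finset.coe_Icc]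
    exact Set.ordConnected_Icc
  · rw [Finset.mem_coe, mem_window] at hy
    have hC₀s : 0 ≤ C₀ * s := by positivity
    apply hstep t m ht hm htm <;> push_cast <;> rw [abs_le] at * <;> constructor <;> linarith
  · rw [mem_window, abs_le] at hz hz'
    rw [abs_le]
    constructor <;> linarith

end Harnack

section Mixing

lemma two_mul_sub_one_le_card_window (a h : ℝ) : 2 * h - 1 ≤ (window a h).card := by
  have hcast : ((⌊a + h⌋ + 1 - ⌈a - h⌉ : ℤ) : ℝ) ≤ (window a h).card := by
    rw [window, Int.card_Icc]
    exact_mod_cast Int.self_le_toNat _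
  push_cast at hcast
  linarith [Int.lt_floor_add_one (a + h), Int.ceil_lt_add_one (a - h)]

lemma card_window_le (a : ℝ) {h : ℝ} (hh : 0 ≤ h) : ((window a h).card : ℝ) ≤ 2 * h + 1 := by
  rcases le_total (⌊a + h⌋ + 1 - ⌈a - h⌉) 0 with hle | hle
  · rw [window, Int.card_Icc, Int.toNat_of_nonpos hle]
    push_cast
    linarith
  · have hcast : ((window a h).card : ℝ) = ((⌊a + h⌋ + 1 - ⌈a - h⌉ : ℤ) : ℝ) := by
      rw [window, Int.card_Icc]
      exact_mod_cast Int.toNat_of_nonneg hle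
    rw [hcast]
    push_cast
    linarith [Int.floor_le (a + h), Int.le_ceil (a - h)]

lemma window_subset_window {a b h k : ℝ} (hab : |a - b| + h ≤ k) : window a h ⊆ window b k := by
  intro z hz
  rw [mem_window] at hz ⊢
  linarith [abs_sub_le (z : ℝ) a b]

lemma mul_sum_window_le_of_forall_le_mul {f : ℤ → ℝ} (hf : ∀ z, 0 ≤ f z) {a b h k H : ℝ}
    (hh : 1 ≤ h) (hk : 0 ≤ k) (hH : 0 ≤ H)
    (hfH : ∀ z ∈ window a h, ∀ z' ∈ window b k, f z' ≤ H * f z) :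
    h * ∑ z ∈ window b k, f z ≤ (2 * k + 1) * (H * ∑ z ∈ window a h, f z) := by
  have hcard : h ≤ (window a h).card := by linarith [two_mul_sub_one_le_card_window a h]
  calc h * ∑ z ∈ window b k, f z
      ≤ (window a h).card * ∑ z ∈ window b k, f z := by
        gcongr
        exact Finset.sum_nonneg fun z _ => hf z
    _ = ∑ _z ∈ window a h, ∑ z' ∈ window b k, f z' := by rw [Finset.sum_const, nsmul_eq_mul]
    _ ≤ ∑ z ∈ window a h, ∑ _z' ∈ window b k, H * f z :=
        Finset.sum_le_sum fun z hz => Finset.sum_le_sum fun z' hz' => hfH z hz z' hz'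
    _ = (window b k).card * (H * ∑ z ∈ window a h, f z) := by
        simp_rw [Finset.sum_const, nsmul_eq_mul, ← Finset.mul_sum]
    _ ≤ (2 * k + 1) * (H * ∑ z ∈ window a h, f z) :=
        mul_le_mul_of_nonneg_right (card_window_le b hk)
          (mul_nonneg hH (Finset.sum_nonneg fun z _ => hf z))

lemma exists_pathCount_le_two_mul_sum_window (p : ℝ) {C : ℝ} (hC : 0 ≤ C) :
    ∃ R ≥ C, ∀ s > 0, ∀ t m : ℕ, (t : ℝ) + m ≤ s ^ 2 → ∀ x w : ℤ,
      |(w : ℝ) - x - p * (t + m)| ≤ C * s →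
      pathCount (t + m) (w - x) ≤ 2 * ∑ z ∈ window (x + p * t) (R * s), throughCount x t m w z := by
  have hκ := varianceRate_pos p
  refine ⟨2 * (C + varianceRate p + 1), by linarith, fun s hs t m htm x w hw => ?_⟩
  have hconc := pathCount_mul_barrier_le_sum_window (c := p) (x := x) (t := t)
    (lam := 2 * (C + varianceRate p + 1) * s) (by positivity) m w
  have hbarrier : 1 - 1 / 2 ≤ barrier p (2 * (C + varianceRate p + 1) * s) (t + m) (w - x) := by
    refine one_sub_le_barrier (d := C * s) (by positivity) (by push_cast; exact hw) ?_
    have hκt : varianceRate p * (t + m) ≤ varianceRate p * s ^ 2 := by gcongr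
    have hR : (C ^ 2 + varianceRate p) * s ^ 2
        ≤ 1 / 2 * (2 * (C + varianceRate p + 1)) ^ 2 * s ^ 2 := by
      gcongr
      nlinarith
    push_cast
    linarith
  have hhalf := mul_le_mul_of_nonneg_left hbarrier (pathCount_nonneg (t + m) (w - x))
  linarith

lemma exists_mul_pathCount_le_sum_window {p τ α : ℝ} (hp : 0 < p) (hτ : 0 < τ) (hα : 0 < α)
    {C : ℝ} (hC : 0 ≤ C) :
    ∃ c > 0, ∀ᶠ s : ℝ in atTop, ∀ t m : ℕ, τ * s ^ 2 ≤ t → τ * s ^ 2 ≤ m → (t : ℝ) + m ≤ s ^ 2 →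
      ∀ x w : ℤ, |(w : ℝ) - x - p * (t + m)| ≤ C * s → ∀ a : ℝ, |a - (x + p * t)| ≤ C * s →
        c * pathCount (t + m) (w - x) ≤ ∑ z ∈ window a (α * s), throughCount x t m w z := by
  obtain ⟨R, hCR, hconc⟩ := exists_pathCount_le_two_mul_sum_window p hC
  obtain ⟨H, hH, hharnack⟩ := exists_throughCount_le_mul hp hτ hC (C := R + α) (by linarith)
  have hR : 0 ≤ R := hC.trans hCR
  refine ⟨α / (2 * (2 * R + 1) * H), by positivity, ?_⟩
  filter_upwards [hharnack, eventually_ge_atTop 1, eventually_ge_atTop α⁻¹] with s hharnack hs hsα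
  intro t m ht hm htm x w hw a ha
  have hs0 : 0 < s := by linarith
  have hCRs : C * s ≤ R * s := by gcongr
  have hαs1 : 1 ≤ α * s := by rwa [inv_le_iff_one_le_mul₀' hα] at hsα
  have hcompare := mul_sum_window_le_of_forall_le_mul (throughCount_nonneg x t m w) hαs1
    (mul_nonneg hR hs0.le) hH.le fun z hz z' hz' => hharnack t m ht hm htm x w hw z
      (window_subset_window (a := a) (h := α * s) (by linarith) hz) z'
      (window_subset_window (a := x + p * t) (h := R * s) (by rw [sub_self, abs_zero]; linarith)
        hz')
  have hsum : 0 ≤ ∑ z ∈ window a (α * s), throughCount x t m w z :=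
    Finset.sum_nonneg fun z _ => throughCount_nonneg x t m w z
  rw [div_mul_eq_mul_div, div_le_iff₀ (by positivity)]
  refine le_of_mul_le_mul_right ?_ hs0
  calc α * pathCount (t + m) (w - x) * s
      ≤ α * (2 * ∑ z ∈ window (x + p * t) (R * s), throughCount x t m w z) * s := by
        gcongr
        exact hconc s hs0 t m htm x w hw
    _ = 2 * (α * s * ∑ z ∈ window (x + p * t) (R * s), throughCount x t m w z) := by ring
    _ ≤ 2 * ((2 * (R * s) + 1) * (H * ∑ z ∈ window a (α * s), throughCount x t m w z)) := by
        gcongr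
    _ ≤ 2 * ((2 * R + 1) * s * (H * ∑ z ∈ window a (α * s), throughCount x t m w z)) := by
        gcongr
        linarith
    _ = (∑ z ∈ window a (α * s), throughCount x t m w z) * (2 * (2 * R + 1) * H) * s := by ring

end Mixing

section Tube

/-- The tube of half-width `h` around the center line `ctr`. -/
def tube (ctr : ℕ → ℝ) (h : ℝ) (j : ℕ) : Set ℤ := {w | |(w : ℝ) - ctr j| ≤ h}

variable {ctr : ℕ → ℝ} {p h : ℝ} {x : ℤ}

lemma mem_tube {j : ℕ} {w : ℤ} : w ∈ tube ctr h j ↔ |(w : ℝ) - ctr j| ≤ h := Iff.rfl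

lemma div_four_mul_sum_window_le_ncard_tubePaths {ε : ℝ} (hh : 0 < h) (hε : 0 ≤ ε) {t m : ℕ}
    (hdrift : ∀ r ≤ m, |ctr (t + r) - ctr t - p * r| ≤ h)
    (hvar : varianceRate p * m ≤ 3 * h ^ 2)
    (hstart : ∀ z ∈ window (ctr t) h,
      ε * pathCount t (z - x) ≤ (tubePaths (tube ctr (6 * h)) x t z).ncard)
    {w : ℤ} (hw : |(w : ℝ) - ctr (t + m)| ≤ h) :
    ε / 4 * ∑ z ∈ window (ctr t) h, throughCount x t m w z
      ≤ (tubePaths (tube ctr (6 * h)) x (t + m) w).ncard := by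
  have hbarrier : ∀ z ∈ window (ctr t) h, 1 / 4 ≤ barrier p (4 * h) m (w - z) := by
    intro z hz
    have hzw : |((w - z : ℤ) : ℝ) - p * m| ≤ 3 * h := by
      have hm := hdrift m le_rfl
      rw [mem_window] at hz
      push_cast
      rw [abs_le] at *
      constructor <;> linarith
    have hquarter := one_sub_le_barrier (lam := 4 * h) (θ := 3 / 4) (by linarith) hzw
      (by linarith)
    linarith
  calc ε / 4 * ∑ z ∈ window (ctr t) h, throughCount x t m w z
      = ε * ∑ z ∈ window (ctr t) h, throughCount x t m w z * (1 / 4) := by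
        rw [← Finset.sum_mul]
        ring
    _ ≤ ε * ∑ z ∈ window (ctr t) h, throughCount x t m w z * barrier p (4 * h) m (w - z) := by
        gcongr with z hz
        · exact throughCount_nonneg x t m w z
        · exact hbarrier z hz
    _ ≤ (tubePaths (tube ctr (6 * h)) x (t + m) w).ncard := by
        refine mul_sum_throughCount_mul_barrier_le_ncard (by linarith) hε hstart
          (fun r hr z hz u hu => ?_) w
        have hr := hdrift r hr
        rw [mem_window] at hz
        push_cast at hu
        rw [mem_tube]
        rw [abs_lt] at hu
        rw [abs_le] at *
        constructor <;> linarith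

lemma pathCount_div_four_le_ncard_tubePaths (hh : 0 < h) (hctr : ctr 0 = x) {m : ℕ}
    (hdrift : ∀ r ≤ m, |ctr r - ctr 0 - p * r| ≤ h) (hvar : varianceRate p * m ≤ 3 * h ^ 2)
    {w : ℤ} (hw : |(w : ℝ) - ctr m| ≤ h) :
    1 / 4 * pathCount m (w - x) ≤ (tubePaths (tube ctr (6 * h)) x m w).ncard := by
  have hx : x ∈ tube ctr (6 * h) 0 := by
    rw [mem_tube, hctr, sub_self, abs_zero]
    linarith
  have hxwindow : x ∈ window (ctr 0) h := by
    rw [mem_window, hctr, sub_self, abs_zero]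
    exact hh.le
  have hblock := div_four_mul_sum_window_le_ncard_tubePaths (x := x) (t := 0) (m := m) hh
    zero_le_one (by simpa only [zero_add] using hdrift) hvar (fun z _ => ?_)
    (by rwa [zero_add])
  · rw [zero_add] at hblock
    refine le_trans ?_ hblock
    gcongr
    refine le_trans (le_of_eq ?_) (Finset.single_le_sum
      (fun z _ => throughCount_nonneg x 0 m w z) hxwindow)
    rw [throughCount, sub_self, pathCount_zero_left, if_pos rfl, one_mul]
  · rw [ncard_tubePaths_zero hx, pathCount_zero_left, one_mul]
    simp [sub_eq_zero]

lemma pow_div_mul_pathCount_le_ncard_tubePaths {c : ℝ} (hh : 0 < h) (hc : 0 ≤ c) (hc1 : c ≤ 1)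
    (hctr : ctr 0 = x) {q n : ℕ} (hq : 0 < q)
    (hdrift : ∀ i, ∀ r ≤ 2 * q, |ctr (i + r) - ctr i - p * r| ≤ h)
    (hvar : varianceRate p * (2 * q) ≤ 3 * h ^ 2)
    (hmix : ∀ t m, q ≤ t → q ≤ m → t + m ≤ n → ∀ w : ℤ, |(w : ℝ) - ctr (t + m)| ≤ h →
      4 * c * pathCount (t + m) (w - x) ≤ ∑ z ∈ window (ctr t) h, throughCount x t m w z)
    {t : ℕ} (hqt : q ≤ t) (htn : t ≤ n) {w : ℤ} (hw : |(w : ℝ) - ctr t| ≤ h) :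
    c ^ (t / q) / 4 * pathCount t (w - x) ≤ (tubePaths (tube ctr (6 * h)) x t w).ncard := by
  have hvar' : ∀ m ≤ 2 * q, varianceRate p * m ≤ 3 * h ^ 2 := by
    intro m hm
    have hm' : (m : ℝ) ≤ 2 * q := by exact_mod_cast hm
    exact (mul_le_mul_of_nonneg_left hm' (varianceRate_pos p).le).trans hvar
  induction t using Nat.strong_induction_on generalizing w with
  | _ t ih =>
    rcases lt_or_ge t (2 * q) with htq | htq
    · refine le_trans ?_ (pathCount_div_four_le_ncard_tubePaths (p := p) hh hctr
        (fun r hr => by simpa only [zero_add] using hdrift 0 r (by lia)) (hvar' t htq.le) hw)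
      have := pow_le_one₀ (n := t / q) hc hc1
      gcongr
      exact pathCount_nonneg _ _
    · obtain ⟨u, rfl⟩ : ∃ u, t = u + q := ⟨t - q, by lia⟩
      have hblock := div_four_mul_sum_window_le_ncard_tubePaths (x := x) hh
        (by positivity : 0 ≤ c ^ (u / q) / 4) (fun r hr => hdrift u r (by lia))
        (hvar' q (by lia))
        (fun z hz => ih u (by lia) (by lia) (by lia) (mem_window.1 hz)) hw
      refine le_trans ?_ hblock
      calc c ^ ((u + q) / q) / 4 * pathCount (u + q) (w - x)
          = c ^ (u / q) / 4 / 4 * (4 * c * pathCount (u + q) (w - x)) := by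
            rw [Nat.add_div_right u hq, pow_succ]
            ring
        _ ≤ c ^ (u / q) / 4 / 4 * ∑ z ∈ window (ctr u) h, throughCount x u q w z := by
            gcongr
            exact hmix u q (by lia) le_rfl htn w hw

lemma abs_increment_sub_le {D T : ℝ} (hD : 0 ≤ D) {n : ℕ}
    (hctr : ∀ i r : ℕ, |ctr (i + r) - ctr i - p * r| ≤ D / √n * r) (i : ℕ) {r : ℕ}
    (hr : r ≤ T * n) : |ctr (i + r) - ctr i - p * r| ≤ D * T * √n :=
  calc |ctr (i + r) - ctr i - p * r| ≤ D / √n * r := hctr i r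
    _ ≤ D / √n * (T * n) := by gcongr
    _ = D * T * (n / √n) := by ring
    _ = D * T * √n := by rw [Real.div_sqrt]

lemma pow_floor_inv_mul_pathCount_le_ncard_tubePaths {c τ α D : ℝ} (hc : 0 ≤ c) (hc1 : c ≤ 1)
    (hD : 0 ≤ D) (hα : 0 < α) (hτ : 0 < τ) (hτ2 : 2 * τ ≤ 1) (hDτ : 4 * D * τ ≤ α)
    (hκτ : 4 * varianceRate p * τ ≤ 3 * α ^ 2) {n : ℕ} (hτn : 1 ≤ τ * n) {y : ℤ}
    (hx : ctr 0 = x) (hy : ctr n = y)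
    (hctr : ∀ i r : ℕ, |ctr (i + r) - ctr i - p * r| ≤ D / √n * r)
    (hmix : ∀ t m : ℕ, τ * n ≤ t → τ * n ≤ m → t + m ≤ n →
      ∀ w : ℤ, |(w : ℝ) - ctr (t + m)| ≤ α * √n →
      4 * c * pathCount (t + m) (w - x)
        ≤ ∑ z ∈ window (ctr t) (α * √n), throughCount x t m w z) :
    c ^ ⌊τ⁻¹⌋₊ / 4 * pathCount n (y - x)
      ≤ (tubePaths (tube ctr (6 * (α * √n))) x n y).ncard := by
  have hn : (0 : ℝ) < n := pos_of_mul_pos_right (by linarith) hτ.le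
  obtain ⟨q, hτq, hq2τ⟩ : ∃ q : ℕ, τ * n ≤ q ∧ q ≤ 2 * τ * n :=
    ⟨⌈τ * n⌉₊, Nat.le_ceil _, by linarith [Nat.ceil_lt_add_one (by linarith : 0 ≤ τ * n)]⟩
  have hq : (0 : ℝ) < q := by linarith
  have hqn : q ≤ n := by
    have : (q : ℝ) ≤ n := hq2τ.trans (mul_le_of_le_one_left hn.le hτ2)
    exact_mod_cast this
  have hnq : n / q ≤ ⌊τ⁻¹⌋₊ := by
    refine Nat.le_floor (Nat.cast_div_le.trans ?_)
    rwa [div_le_iff₀ hq, inv_mul_eq_div, le_div_iff₀' hτ]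
  have hcast : ∀ {r : ℕ}, q ≤ r → τ * n ≤ r := fun hr => hτq.trans (by exact_mod_cast hr)
  have hdrift : ∀ i, ∀ r ≤ 2 * q, |ctr (i + r) - ctr i - p * r| ≤ α * √n := by
    intro i r hr
    have hr' : (r : ℝ) ≤ 2 * q := by exact_mod_cast hr
    refine (abs_increment_sub_le hD hctr i (T := 4 * τ) (by linarith)).trans ?_
    exact mul_le_mul_of_nonneg_right (by linarith) (Real.sqrt_nonneg _)
  have hvar : varianceRate p * (2 * q) ≤ 3 * (α * √n) ^ 2 := by
    calc varianceRate p * (2 * q) ≤ varianceRate p * (2 * (2 * τ * n)) :=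
          mul_le_mul_of_nonneg_left (by linarith) (varianceRate_pos p).le
      _ = 4 * varianceRate p * τ * n := by ring
      _ ≤ 3 * α ^ 2 * n := mul_le_mul_of_nonneg_right hκτ hn.le
      _ = 3 * (α * √n) ^ 2 := by rw [mul_pow, Real.sq_sqrt hn.le, mul_assoc]
  refine le_trans ?_ (pow_div_mul_pathCount_le_ncard_tubePaths (by positivity) hc hc1 hx
    (by exact_mod_cast hq) hdrift hvar
    (fun t m ht hm htm => hmix t m (hcast ht) (hcast hm) htm) hqn le_rfl ?_)
  · exact mul_le_mul_of_nonneg_right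
      (div_le_div_of_nonneg_right (pow_le_pow_of_le_one hc hc1 hnq) zero_le_four)
      (pathCount_nonneg _ _)
  · rw [hy, sub_self, abs_zero]
    positivity

end Tube

lemma exists_mul_pathCount_le_ncard_tubePaths {p α D : ℝ} (hp : 0 < p) (hα : 0 < α) (hD : 0 ≤ D) :
    ∃ ε > 0, ∀ᶠ n : ℕ in atTop, ∀ (x y : ℤ) (ctr : ℕ → ℝ), ctr 0 = x → ctr n = y →
      (∀ i r : ℕ, |ctr (i + r) - ctr i - p * r| ≤ D / √n * r) →
      ε * pathCount n (y - x) ≤ (tubePaths (tube ctr (6 * (α * √n))) x n y).ncard := by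
  have hκ := varianceRate_pos p
  obtain ⟨τ, hτ, hτlt⟩ := exists_pos_mul_lt (show 0 < min 1 (min α (α ^ 2)) by positivity)
    (2 + 4 * D + 4 * varianceRate p)
  rw [lt_min_iff, lt_min_iff] at hτlt
  obtain ⟨hτ1, hτα, hτα2⟩ := hτlt
  have hDτ : 0 ≤ D * τ := by positivity
  have hκτ : 0 ≤ varianceRate p * τ := by positivity
  obtain ⟨c, hc, hmix⟩ := exists_mul_pathCount_le_sum_window hp hτ hα (add_nonneg hα.le hD)
  have hsqrt : Tendsto (fun n : ℕ => √(n : ℝ)) atTop atTop :=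
    Real.tendsto_sqrt_atTop.comp tendsto_natCast_atTop_atTop
  refine ⟨min (c / 4) 1 ^ ⌊τ⁻¹⌋₊ / 4, by positivity, ?_⟩
  filter_upwards [hsqrt.eventually hmix, tendsto_natCast_atTop_atTop.eventually_ge_atTop τ⁻¹]
    with n hmix hnτ x y ctr hx hy hctr
  rw [Real.sq_sqrt n.cast_nonneg] at hmix
  have hline : ∀ r ≤ n, |ctr r - x - p * r| ≤ D * √n := by
    intro r hr
    simpa [hx] using abs_increment_sub_le hD hctr 0 (T := 1) (r := r) (by simpa using hr)
  have hαs : 0 ≤ α * √n := by positivity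
  refine pow_floor_inv_mul_pathCount_le_ncard_tubePaths (by positivity) (min_le_right _ _) hD hα
    hτ (by linarith) (by linarith) (by linarith [sq_nonneg α])
    (by rwa [inv_le_iff_one_le_mul₀' hτ] at hnτ) hx hy hctr fun t m ht hm htm w hw => ?_
  calc 4 * min (c / 4) 1 * pathCount (t + m) (w - x) ≤ c * pathCount (t + m) (w - x) :=
        mul_le_mul_of_nonneg_right (by linarith [min_le_left (c / 4) 1]) (pathCount_nonneg _ _)
    _ ≤ ∑ z ∈ window (ctr t) (α * √n), throughCount x t m w z := by
        have htm' := hline (t + m) htm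
        have ht' := hline t (by lia)
        refine hmix t m ht hm (by exact_mod_cast htm) x w ?_ _ ?_
        · push_cast at htm'
          rw [abs_le] at *
          constructor <;> linarith
        · rw [← sub_sub]
          exact ht'.trans (by linarith)

lemma UniformOn.ofReal_le_measure {Ω E : Type*} [MeasurableSpace Ω] {P : Measure Ω}
    [IsProbabilityMeasure P] {X : Ω → E} {S G : Set E} (hX : UniformOn P X S) (hS : S.Finite)
    (hGS : G ⊆ S) {ε : ℝ} (hε : ε * S.ncard ≤ G.ncard) :
    ENNReal.ofReal ε ≤ P {ω | X ω ∈ G} := by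
  have hcompl : P {ω | X ω ∈ S \ G} ≤ (S \ G).ncard / S.ncard := by
    have hfin := hS.sdiff (t := G)
    calc P {ω | X ω ∈ S \ G} ≤ P (⋃ e ∈ hfin.toFinset, {ω | X ω = e}) :=
          measure_mono fun ω hω => by simpa using hω
      _ ≤ ∑ e ∈ hfin.toFinset, P {ω | X ω = e} := measure_biUnion_finset_le _ _
      _ = ∑ _e ∈ hfin.toFinset, (S.ncard : ℝ≥0∞)⁻¹ :=
          Finset.sum_congr rfl fun e he => hX.2 e (hfin.mem_toFinset.1 he).1
      _ = (S \ G).ncard / S.ncard := by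
          rw [Finset.sum_const, nsmul_eq_mul, Set.ncard_eq_toFinset_card _ hfin, div_eq_mul_inv]
  obtain ⟨ω⟩ := P.nonempty_of_neZero
  have hS0 : (S.ncard : ℝ≥0∞) ≠ 0 :=
    Nat.cast_ne_zero.2 (Set.ncard_ne_zero_of_mem (hX.1 ω) hS)
  have htotal : (G.ncard : ℝ≥0∞) / S.ncard + (S \ G).ncard / S.ncard
      ≤ P {ω | X ω ∈ G} + (S \ G).ncard / S.ncard := by
    calc (G.ncard : ℝ≥0∞) / S.ncard + (S \ G).ncard / S.ncard = 1 := by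
          rw [← ENNReal.add_div, ← Nat.cast_add, add_comm,
            Set.ncard_sdiff_add_ncard_of_subset hGS hS,
            ENNReal.div_self hS0 (ENNReal.natCast_ne_top _)]
      _ = P Set.univ := measure_univ.symm
      _ ≤ P ({ω | X ω ∈ G} ∪ {ω | X ω ∈ S \ G}) :=
          measure_mono fun ω _ => (em (X ω ∈ G)).imp id fun h => ⟨hX.1 ω, h⟩
      _ ≤ P {ω | X ω ∈ G} + (S \ G).ncard / S.ncard :=
          (measure_union_le _ _).trans (add_le_add le_rfl hcompl)
  refine le_trans ?_ ((ENNReal.add_le_add_iff_right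
    (ENNReal.div_ne_top (ENNReal.natCast_ne_top _) hS0)).1 htotal)
  rw [ENNReal.le_div_iff_mul_le (.inl hS0) (.inl (ENNReal.natCast_ne_top _)),
    ← ENNReal.ofReal_natCast, ← ENNReal.ofReal_mul' S.ncard.cast_nonneg,
    ← ENNReal.ofReal_natCast G.ncard]
  exact ENNReal.ofReal_le_ofReal hε

/-- The path `L` on `⟦0, n⟧`, interpolated linearly, centered along the line of slope `p`,
and rescaled diffusively with standard deviation `σ`. -/
noncomputable def rescaledPath (p σ : ℝ) (n : ℕ) (L : ℤ → ℤ) (t : ℝ) : ℝ :=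
  σ⁻¹ * (√n)⁻¹ * (interpZ L (t * n) - p * t * n)

/-- The points at integer times, in the original coordinates, of the curve that `rescaledPath`
would rescale to `F`. -/
noncomputable def unscaledCurve (p σ : ℝ) (n : ℕ) (F : ℝ → ℝ) (j : ℕ) : ℝ :=
  p * j + σ * √n * F (j / n)

lemma unscaledCurve_zero {p σ x : ℝ} {n : ℕ} {F : ℝ → ℝ} (hσ : 0 < σ) (hn : 0 < n)
    (hF : F 0 = σ⁻¹ * (√n)⁻¹ * x) : unscaledCurve p σ n F 0 = x := by
  have hscale : 0 < σ * √n := mul_pos hσ (Real.sqrt_pos.2 (by exact_mod_cast hn))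
  rw [unscaledCurve, Nat.cast_zero, mul_zero, zero_div, zero_add, hF, ← mul_inv,
    mul_inv_cancel_left₀ hscale.ne']

lemma unscaledCurve_self {p σ y : ℝ} {n : ℕ} {F : ℝ → ℝ} (hσ : 0 < σ) (hn : 0 < n)
    (hF : F 1 = σ⁻¹ * (√n)⁻¹ * (y - p * n)) : unscaledCurve p σ n F n = y := by
  have hn0 : (0 : ℝ) < n := by exact_mod_cast hn
  have hscale : 0 < σ * √n := mul_pos hσ (Real.sqrt_pos.2 hn0)
  rw [unscaledCurve, div_self hn0.ne', hF, ← mul_inv, mul_inv_cancel_left₀ hscale.ne',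
    add_sub_cancel]

lemma abs_unscaledCurve_add_sub_sub_le {σ : ℝ} (hσ : 0 < σ) {n : ℕ} (hn : 0 < n) {F : ℝ → ℝ}
    {Λ : ℝ≥0} (hF : LipschitzWith Λ F) (p : ℝ) (i r : ℕ) :
    |unscaledCurve p σ n F (i + r) - unscaledCurve p σ n F i - p * r| ≤ σ * Λ / √n * r := by
  have hscale : 0 < σ * √n := mul_pos hσ (Real.sqrt_pos.2 (by exact_mod_cast hn))
  have hincrement : |F ((i + r : ℕ) / n) - F (i / n)| ≤ Λ * (r / n) := by
    refine (hF.dist_le_mul _ _).trans_eq ?_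
    rw [Real.dist_eq, Nat.cast_add, add_div, add_sub_cancel_left, abs_of_nonneg (by positivity)]
  calc |unscaledCurve p σ n F (i + r) - unscaledCurve p σ n F i - p * r|
      = |σ * √n * (F ((i + r : ℕ) / n) - F (i / n))| := by
        simp only [unscaledCurve]
        push_cast
        ring_nf
    _ = σ * √n * |F ((i + r : ℕ) / n) - F (i / n)| := by rw [abs_mul, abs_of_pos hscale]
    _ ≤ σ * √n * (Λ * (r / n)) := by gcongr
    _ = σ * Λ * r * (√n / n) := by ring
    _ = σ * Λ / √n * r := by
        rw [Real.sqrt_div_self']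
        ring

lemma exists_natCast_le_mul_le {n : ℕ} (hn : 0 < n) {t : ℝ} (ht : t ∈ Set.Icc (0 : ℝ) 1) :
    ∃ j < n, (j : ℝ) ≤ t * n ∧ t * n ≤ j + 1 := by
  have htn : 0 ≤ t * n := mul_nonneg ht.1 n.cast_nonneg
  rcases lt_or_ge ⌊t * n⌋₊ n with hlt | hge
  · exact ⟨⌊t * n⌋₊, hlt, Nat.floor_le htn, (Nat.lt_floor_add_one _).le⟩
  · have htn' : t * n ≤ n := mul_le_of_le_one_left n.cast_nonneg ht.2
    have hnt : (n : ℝ) ≤ t * n := (Nat.le_floor_iff htn).1 hge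
    refine ⟨n - 1, by lia, ?_, ?_⟩ <;> rw [Nat.cast_pred hn] <;> linarith

lemma abs_rescaledPath_sub_le {p σ b : ℝ} {n : ℕ} (hn : 0 < n) {F : ℝ → ℝ} {Λ : ℝ≥0}
    (hF : LipschitzWith Λ F) {L : ℤ → ℤ}
    (hL : ∀ j : ℕ, j ≤ n → |σ⁻¹ * (√n)⁻¹ * (L j - p * j) - F (j / n)| ≤ b)
    {t : ℝ} (ht : t ∈ Set.Icc (0 : ℝ) 1) : |rescaledPath p σ n L t - F t| ≤ b + Λ / n := by
  obtain ⟨j, hjn, hjt, htj⟩ := exists_natCast_le_mul_le hn ht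
  have hn0 : (0 : ℝ) < n := by exact_mod_cast hn
  have hnear : ∀ i : ℕ, i ≤ n → |(i : ℝ) - t * n| ≤ 1 →
      |σ⁻¹ * (√n)⁻¹ * (L i - p * i) - F t| ≤ b + Λ / n := by
    intro i hi hit
    have hFi : |F (i / n) - F t| ≤ Λ / n := by
      have hdist : dist (i / n : ℝ) t ≤ 1 / n := by
        rw [Real.dist_eq, div_sub' hn0.ne', abs_div, abs_of_pos hn0, mul_comm]
        gcongr
      calc |F (i / n) - F t| ≤ Λ * dist (i / n : ℝ) t := hF.dist_le_mul _ _
        _ ≤ Λ * (1 / n) := by gcongr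
        _ = Λ / n := mul_one_div _ _
    exact (abs_sub_le _ (F (i / n)) _).trans (add_le_add (hL i hi) hFi)
  have hj := hnear j hjn.le (abs_le.2 ⟨by linarith, by linarith⟩)
  have hj1 := hnear (j + 1) hjn (by push_cast; exact abs_le.2 ⟨by linarith, by linarith⟩)
  have hinterp : interpZ L (t * n) = L j + (t * n - j) * (L (j + 1) - L j) :=
    interp_eq_on _ j _ ⟨hjt, htj⟩
  have hconvex : rescaledPath p σ n L t - F t
      = (1 - (t * n - j)) * (σ⁻¹ * (√n)⁻¹ * (L j - p * j) - F t)
        + (t * n - j) * (σ⁻¹ * (√n)⁻¹ * (L (j + 1 : ℕ) - p * (j + 1 : ℕ)) - F t) := by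
    rw [rescaledPath, hinterp]
    push_cast
    ring
  have hball := convex_closedBall (0 : ℝ) (b + Λ / n) (mem_closedBall_zero_iff.2 hj)
    (mem_closedBall_zero_iff.2 hj1) (sub_nonneg.2 (by linarith : t * n - j ≤ 1))
    (sub_nonneg.2 hjt) (by ring)
  rw [hconvex]
  exact mem_closedBall_zero_iff.1 hball

lemma abs_rescaledPath_sub_le_of_mem_tubePaths {p σ A : ℝ} (hσ : 0 < σ) {n : ℕ} (hn : 0 < n)
    {F : ℝ → ℝ} {Λ : ℝ≥0} (hF : LipschitzWith Λ F) {r : ℝ} (hr : r / (σ * √n) + Λ / n ≤ A)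
    {x y : ℤ} {L : ℤ → ℤ}
    (hL : L ∈ tubePaths (tube (unscaledCurve p σ n F) r) x n y)
    {t : ℝ} (ht : t ∈ Set.Icc (0 : ℝ) 1) : |rescaledPath p σ n L t - F t| ≤ A := by
  have hscale : 0 < σ * √n := mul_pos hσ (Real.sqrt_pos.2 (by exact_mod_cast hn))
  refine (abs_rescaledPath_sub_le hn hF (fun j hj => ?_) ht).trans hr
  have hj := mem_tube.1 (hL.2 j hj)
  rw [unscaledCurve] at hj
  rw [← mul_inv, inv_mul_eq_div, div_sub' hscale.ne', abs_div, abs_of_pos hscale, ← sub_sub] at *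
  gcongr

lemma exists_ofReal_lt_measure_abs_rescaledPath_sub_le {p σ A : ℝ} (hp : 0 < p) (hσ : 0 < σ)
    (hA : 0 < A) (Λ : ℝ≥0) :
    ∃ ε > 0, ∀ᶠ n : ℕ in atTop, ∀ (x y : ℤ) (F : ℝ → ℝ), LipschitzWith Λ F →
      F 0 = σ⁻¹ * (√n)⁻¹ * x → F 1 = σ⁻¹ * (√n)⁻¹ * (y - p * n) →
      ∀ (Ω : Type*) (_ : MeasurableSpace Ω) (P : Measure Ω), IsProbabilityMeasure P →
      ∀ Q : Ω → ℤ → ℤ, UniformOn P Q (OmegaPath 0 n x y) →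
        ENNReal.ofReal ε < P {ω | ∀ t ∈ Set.Icc (0 : ℝ) 1, |rescaledPath p σ n (Q ω) t - F t| ≤ A}
    := by
  obtain ⟨ε, hε, hcount⟩ := exists_mul_pathCount_le_ncard_tubePaths hp (α := σ * A / 8)
    (D := σ * Λ) (by positivity) (by positivity)
  refine ⟨ε / 2, by positivity, ?_⟩
  filter_upwards [hcount, eventually_gt_atTop 0,
    tendsto_natCast_atTop_atTop.eventually_ge_atTop (4 * Λ / A)]
    with n hcount hn hnΛ x y F hF hF0 hF1 Ω _ P _ Q hQ
  have hn0 : (0 : ℝ) < n := by exact_mod_cast hn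
  have hcard := hcount x y (unscaledCurve p σ n F) (unscaledCurve_zero hσ hn hF0)
    (unscaledCurve_self hσ hn hF1) (abs_unscaledCurve_add_sub_sub_le hσ hn hF p)
  rw [← ncard_omegaPath] at hcard
  have hfinite : (OmegaPath 0 n x y).Finite := tubePaths_univ x n y ▸ finite_tubePaths n y
  have hradius : 6 * (σ * A / 8 * √n) / (σ * √n) + Λ / n ≤ A := by
    have hs : 0 < √(n : ℝ) := Real.sqrt_pos.2 hn0
    have hmain : 6 * (σ * A / 8 * √n) / (σ * √n) = 3 / 4 * A := by
      field_simp
      norm_num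
    have herror : (Λ : ℝ) / n ≤ A / 4 := by
      rw [div_le_iff₀ hn0]
      rw [div_le_iff₀ hA] at hnΛ
      linarith
    linarith
  calc ENNReal.ofReal (ε / 2) < ENNReal.ofReal ε :=
        (ENNReal.ofReal_lt_ofReal_iff hε).2 (by linarith)
    _ ≤ P {ω | Q ω ∈ tubePaths (tube (unscaledCurve p σ n F) (6 * (σ * A / 8 * √n))) x n y} :=
        hQ.ofReal_le_measure hfinite (fun L hL => hL.1) hcard
    _ ≤ P {ω | ∀ t ∈ Set.Icc (0 : ℝ) 1, |rescaledPath p σ n (Q ω) t - F t| ≤ A} := by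
        exact measure_mono fun ω hω t ht =>
          abs_rescaledPath_sub_le_of_mem_tubePaths hσ hn hF hradius hω ht

lemma corridor_eq_add_corridor_zero (A B x y δ t : ℝ) :
    corridor A B x y δ t = corridor 0 B x y δ t + A := by
  unfold corridor
  split_ifs <;> ring

lemma corridor_zero_eq {δ : ℝ} (hδ : δ ∈ Set.Ioo (0 : ℝ) (1 / 2)) (B x y t : ℝ) :
    corridor 0 B x y δ t
      = B + (x - B) * max (1 - t / δ) 0 + (y - B) * max ((t - (1 - δ)) / δ) 0 := by
  obtain ⟨hδ0, hδ2⟩ := hδ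
  unfold corridor
  split_ifs with hleft hmid
  · rw [max_eq_left (sub_nonneg.2 ((div_le_one hδ0).2 hleft)),
      max_eq_right (div_nonpos_of_nonpos_of_nonneg (by linarith) hδ0.le)]
    ring
  · rw [max_eq_right (sub_nonpos.2 ((one_le_div hδ0).2 (not_le.1 hleft).le)),
      max_eq_right (div_nonpos_of_nonpos_of_nonneg (by linarith) hδ0.le)]
    ring
  · rw [max_eq_right (sub_nonpos.2 ((one_le_div hδ0).2 (not_le.1 hleft).le)),
      max_eq_left (div_nonneg (by linarith) hδ0.le)]
    ring

lemma lipschitzWith_corridor_zero {δ R B x y : ℝ} (hδ : δ ∈ Set.Ioo (0 : ℝ) (1 / 2))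
    (hx : |x - B| ≤ R) (hy : |y - B| ≤ R) :
    LipschitzWith (2 * R / δ).toNNReal (corridor 0 B x y δ) := by
  refine LipschitzWith.of_dist_le' fun s t => ?_
  have hδ0 := hδ.1
  have hleft : |max (1 - s / δ) 0 - max (1 - t / δ) 0| ≤ |s - t| / δ := by
    calc |max (1 - s / δ) 0 - max (1 - t / δ) 0| ≤ |1 - s / δ - (1 - t / δ)| :=
          abs_max_sub_max_le_abs _ _ _
      _ = |s - t| / δ := by
          rw [sub_sub_sub_cancel_left, ← sub_div, abs_div, abs_of_pos hδ0, abs_sub_comm]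
  have hright : |max ((s - (1 - δ)) / δ) 0 - max ((t - (1 - δ)) / δ) 0| ≤ |s - t| / δ := by
    calc |max ((s - (1 - δ)) / δ) 0 - max ((t - (1 - δ)) / δ) 0|
        ≤ |(s - (1 - δ)) / δ - (t - (1 - δ)) / δ| := abs_max_sub_max_le_abs _ _ _
      _ = |s - t| / δ := by
          rw [← sub_div, sub_sub_sub_cancel_right, abs_div, abs_of_pos hδ0]
  have hR : 0 ≤ R := (abs_nonneg _).trans hx
  calc dist (corridor 0 B x y δ s) (corridor 0 B x y δ t)
      = |(x - B) * (max (1 - s / δ) 0 - max (1 - t / δ) 0)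
          + (y - B) * (max ((s - (1 - δ)) / δ) 0 - max ((t - (1 - δ)) / δ) 0)| := by
        rw [Real.dist_eq, corridor_zero_eq hδ, corridor_zero_eq hδ]
        ring_nf
    _ ≤ R * (|s - t| / δ) + R * (|s - t| / δ) := by
        refine (abs_add_le _ _).trans ?_
        rw [abs_mul, abs_mul]
        gcongr
    _ = 2 * R / δ * dist s t := by
        rw [Real.dist_eq]
        ring

lemma corridor_zero_apply_zero {δ : ℝ} (hδ : 0 ≤ δ) (B x y : ℝ) :
    corridor 0 B x y δ 0 = x := by
  simp [corridor, hδ]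

lemma corridor_zero_apply_one {δ : ℝ} (hδ : δ ∈ Set.Ioo (0 : ℝ) (1 / 2)) (B x y : ℝ) :
    corridor 0 B x y δ 1 = y := by
  have hδ1 : ¬ 1 ≤ δ := by linarith [hδ.2]
  simp [corridor, hδ1, hδ.1, hδ.1.ne']

lemma abs_inv_mul_inv_sqrt_mul_le {σ M a : ℝ} (hσ : 0 < σ) {n : ℕ} (hn : 0 < n)
    (ha : |a| ≤ M * √n) : |σ⁻¹ * (√n)⁻¹ * a| ≤ σ⁻¹ * M := by
  have hs : 0 < √(n : ℝ) := Real.sqrt_pos.2 (by exact_mod_cast hn)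
  rw [mul_assoc, abs_mul, abs_of_pos (inv_pos.2 hσ), abs_mul, abs_of_pos (inv_pos.2 hs)]
  gcongr
  rwa [inv_mul_le_iff₀ hs, mul_comm]

/-- (Lemma 3.5, staying in the corridor.) With probability bounded below, a rescaled
geometric random walk bridge stays in the corridor between `f(·|A,B,·,·,δ1)` and
`f(·|-A,B,·,·,δ1)`. -/
theorem staying_in_corridor
    (p M1 M2 A : ℝ) (hp : 0 < p) (hM1 : 0 < M1) (hM2 : 0 < M2) (hA : 0 < A)
    (δ1 : ℝ) (hδ1 : δ1 ∈ Set.Ioo (0 : ℝ) (1 / 2)) :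
    ∃ (N4 : ℕ) (ε : ℝ), 0 < ε ∧
      ∀ n : ℕ, N4 ≤ n → ∀ x y : ℤ, x ≤ y →
        |(x : ℝ)| ≤ M1 * Real.sqrt n → |(y : ℝ) - n * p| ≤ M1 * Real.sqrt n →
        ∀ B ∈ Set.Icc (-M2) M2,
        ∀ (Ω : Type) (_ : MeasurableSpace Ω) (P : Measure Ω), IsProbabilityMeasure P →
        ∀ Q : Ω → ℤ → ℤ, UniformOn P Q (OmegaPath 0 n x y) →
          ENNReal.ofReal ε < P {ω | ∀ t ∈ Set.Icc (0 : ℝ) 1,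
            corridor (-A) B ((Real.sqrt (p * (1 + p)))⁻¹ * (Real.sqrt n)⁻¹ * x)
                ((Real.sqrt (p * (1 + p)))⁻¹ * (Real.sqrt n)⁻¹ * ((y : ℝ) - p * n)) δ1 t
              ≤ (Real.sqrt (p * (1 + p)))⁻¹ * (Real.sqrt n)⁻¹ *
                (interpZ (Q ω) (t * n) - p * t * n) ∧
            (Real.sqrt (p * (1 + p)))⁻¹ * (Real.sqrt n)⁻¹ *
                (interpZ (Q ω) (t * n) - p * t * n)
              ≤ corridor A B ((Real.sqrt (p * (1 + p)))⁻¹ * (Real.sqrt n)⁻¹ * x)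
                ((Real.sqrt (p * (1 + p)))⁻¹ * (Real.sqrt n)⁻¹ * ((y : ℝ) - p * n)) δ1 t} := by
  have hσ : 0 < √(p * (1 + p)) := by positivity
  obtain ⟨ε, hε, hcorridor⟩ := exists_ofReal_lt_measure_abs_rescaledPath_sub_le hp hσ hA
    (2 * ((√(p * (1 + p)))⁻¹ * M1 + M2) / δ1).toNNReal
  obtain ⟨N, hN⟩ := eventually_atTop.1 (hcorridor.and (eventually_gt_atTop 0))
  refine ⟨N, ε, hε, fun n hn x y _ hx hy B hB Ω _ P hP Q hQ => ?_⟩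
  obtain ⟨hcorridor, hn0⟩ := hN n hn
  rw [mul_comm (n : ℝ)] at hy
  have hend : ∀ a : ℝ, |a| ≤ M1 * √n →
      |(√(p * (1 + p)))⁻¹ * (√n)⁻¹ * a - B| ≤ (√(p * (1 + p)))⁻¹ * M1 + M2 := fun a ha =>
    (abs_sub _ _).trans
      (add_le_add (abs_inv_mul_inv_sqrt_mul_le hσ hn0 ha) (abs_le.2 hB))
  refine (hcorridor x y _ (lipschitzWith_corridor_zero hδ1 (hend x hx) (hend _ hy))
    (corridor_zero_apply_zero hδ1.1.le _ _ _) (corridor_zero_apply_one hδ1 _ _ _)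
    Ω _ P hP Q hQ).trans_le (measure_mono fun ω hω t ht => ?_)
  have hdist := abs_le.1 (hω t ht)
  rw [corridor_eq_add_corridor_zero (-A), corridor_eq_add_corridor_zero A]
  unfold rescaledPath at hdist
  constructor <;> linarith
end
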